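/- arXiv:math/0601473 — 2 statements merged into one kernel-verified Lean document; each statement's English description precedes it below -/
import Mathlib

section
/- Let ν be an ergodic σ-invariant Borel probability measure on Σ with λ(ν) < 0, and let μ be the Borel probability measure invariant for (T₀,T₁,ν). Then for ν-almost every ω̄ = (ω₀, ω₁, …) ∈ Σ, for every x ∈ ℝ₊ and every continuous function f : ℝ̄₊ → ℝ, one has (1/n)·Σ_{i=0}^{n−1} f(x_i) → ∫ f dμ as n → ∞, where x₀ = x and x_{i} = T_{ω_{i−1}} ∘ ⋯ ∘ T_{ω₀}(x). -/
/-!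
Two finite points driven by the same symbol sequence `ω` have, after `n` steps, the distance
`|x - y| · exp (Sₙ φ (ω))`, where `φ` is the logarithmic slope and `Sₙ φ` its Birkhoff sum over the
shift. Since `∫ φ dν = λ(ν) < 0`, these sums tend to `-∞` for `ν`-a.e. `ω` (`ae_isContracting`).
A continuous function on `[0,∞]` is uniformly continuous for the Euclidean distance on `[0,∞)`, so
along such an `ω` the time averages started at any two finite points are asymptotic to each other
(`IsContracting.tendsto_pathAverage_sub`), and it suffices to treat the path started at `0`.

The upper limit of the averages of `f` along that path is a function of `ω` which is
shift-invariant almost everywhere, again by contraction, so by ergodicity the set where it is at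
least `c = ∫ f dμ + ε` is null or conull. Were it conull, then, as `μ` does not charge `∞`,
`κ`-almost every orbit of the skew product would have a positive Birkhoff sum of `f - q` for some
`q > ∫ f dμ`, and the maximal inequality for `κ` would give `∫ f dμ ≥ q`
(`ae_eventually_pathAverage_le`). Applying this to `f` and `-f` gives convergence for each fixed
`f`, and separability of `C([0,∞], ℝ)` makes the exceptional null set independent of `f`.

The only ergodic-theoretic input is Garsia's form of the maximal inequality,
`integral_nonneg_of_birkhoffSum_pos`; ergodicity of `κ` is never required.
-/

open MeasureTheory Filter
open scoped ENNReal

/-- The generators `T₀(x) = a·x`, `T₁(x) = b·x + 1`, extended to the one-point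
compactification `ℝ̄₊ = [0,∞]` (modelled by `ℝ≥0∞`) by `T₀(∞) = T₁(∞) = ∞`. -/
noncomputable def Tmap (a b : ℝ) (i : Bool) (x : ℝ≥0∞) : ℝ≥0∞ :=
  if i then ENNReal.ofReal b * x + 1 else ENNReal.ofReal a * x

/-- The one-sided full shift `σ` on `Σ = {0,1}^{ℕ₀}`. -/
def shiftMap (ω : ℕ → Bool) : ℕ → Bool := fun i => ω (i + 1)

/-- The skew product `τ(ω̄, x) = (σ(ω̄), T_{ω̄₀}(x))` on `X = Σ × ℝ̄₊`. -/
noncomputable def skewMap (a b : ℝ) (z : (ℕ → Bool) × ℝ≥0∞) : (ℕ → Bool) × ℝ≥0∞ :=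
  (shiftMap z.1, Tmap a b (z.1 0) z.2)

/-- A Borel probability measure `μ` on `ℝ̄₊` with `μ({∞}) = 0` is *invariant for*
`(T₀, T₁, ν)` if there is a `τ`-invariant Borel probability measure `κ` on `Σ × ℝ̄₊`
whose marginal on `Σ` is `ν` and whose marginal on `ℝ̄₊` is `μ`. -/
def IsInvariantFor (a b : ℝ) (ν : Measure (ℕ → Bool)) (μ : Measure ℝ≥0∞) : Prop :=
  IsProbabilityMeasure μ ∧ μ {⊤} = 0 ∧
    ∃ κ : Measure ((ℕ → Bool) × ℝ≥0∞), IsProbabilityMeasure κ ∧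
      MeasurePreserving (skewMap a b) κ κ ∧
      κ.map Prod.fst = ν ∧ κ.map Prod.snd = μ

/-- The Lyapunov exponent `λ(ν) = ν(C₀)·ln a + ν(C₁)·ln b` of a shift-invariant
measure `ν` on `Σ`, where `Cᵢ = {ω̄ : ω̄₀ = i}`. -/
noncomputable def lyap (a b : ℝ) (ν : Measure (ℕ → Bool)) : ℝ :=
  (ν {ω | ω 0 = false}).toReal * Real.log a + (ν {ω | ω 0 = true}).toReal * Real.log b


open Topology

/-! ### A maximal inequality -/

/-- Garsia's running maximum `max (0, S₁ h, …, Sₙ h)` of the Birkhoff sums, in recursive form. -/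
noncomputable def garsiaMax {α : Type*} (T : α → α) (h : α → ℝ) : ℕ → α → ℝ
  | 0, _ => 0
  | n + 1, x => max 0 (h x + garsiaMax T h n (T x))

lemma garsiaMax_nonneg {α : Type*} (T : α → α) (h : α → ℝ) (n : ℕ) (x : α) :
    0 ≤ garsiaMax T h n x := by
  cases n with
  | zero => exact le_rfl
  | succ n => exact le_max_left _ _

lemma garsiaMax_mono {α : Type*} (T : α → α) (h : α → ℝ) (x : α) :
    Monotone fun n => garsiaMax T h n x := by
  refine monotone_nat_of_le_succ fun n => ?_
  induction n generalizing x with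
  | zero => exact garsiaMax_nonneg T h 1 x
  | succ n ih => exact max_le_max le_rfl (add_le_add le_rfl (ih (T x)))

lemma birkhoffSum_le_garsiaMax {α : Type*} (T : α → α) (h : α → ℝ) (n : ℕ) (x : α) :
    birkhoffSum T h n x ≤ garsiaMax T h n x := by
  induction n generalizing x with
  | zero => simp [garsiaMax]
  | succ n ih =>
    rw [birkhoffSum_succ']
    exact le_max_of_le_right (add_le_add le_rfl (ih (T x)))

lemma integrable_garsiaMax {α : Type*} [MeasurableSpace α] {m : Measure α} {T : α → α}
    (hT : MeasurePreserving T m m) {h : α → ℝ} (hi : Integrable h m) (n : ℕ) :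
    Integrable (garsiaMax T h n) m := by
  induction n with
  | zero => exact integrable_zero _ _ _
  | succ n ih =>
    exact (integrable_zero α ℝ m).sup (hi.add (hT.integrable_comp_of_integrable ih))

/-- Consequence of the maximal ergodic theorem: the integral of `h` is nonnegative as soon as
almost every orbit has a positive Birkhoff sum of `h`. -/
theorem integral_nonneg_of_birkhoffSum_pos {α : Type*} [MeasurableSpace α] {m : Measure α}
    {T : α → α} (hT : MeasurePreserving T m m) {h : α → ℝ}
    (hi : Integrable h m) (hpos : ∀ᵐ x ∂m, ∃ n, 0 < birkhoffSum T h n x) :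
    0 ≤ ∫ x, h x ∂m := by
  have hMm : ∀ n, AEStronglyMeasurable (garsiaMax T h n) m :=
    fun n => (integrable_garsiaMax hT hi n).aestronglyMeasurable
  have hset : ∀ n, NullMeasurableSet {x | 0 < garsiaMax T h n x} m := fun n =>
    nullMeasurableSet_lt aemeasurable_const (hMm n).aemeasurable
  have key : ∀ n, 0 ≤ ∫ x, {x | 0 < garsiaMax T h (n + 1) x}.indicator h x ∂m := by
    intro n
    have h1 : ∫ x, garsiaMax T h n (T x) ∂m = ∫ x, garsiaMax T h n x ∂m := by
      have := integral_map (μ := m) hT.aemeasurable (f := garsiaMax T h n)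
        (by rw [hT.map_eq]; exact hMm n)
      rw [← this, hT.map_eq]
    have h2 : ∫ x, garsiaMax T h n x ∂m ≤ ∫ x, garsiaMax T h (n + 1) x ∂m :=
      integral_mono (integrable_garsiaMax hT hi n) (integrable_garsiaMax hT hi (n + 1))
        fun x => garsiaMax_mono T h x (Nat.le_succ n)
    have hcomp : Integrable (fun x => garsiaMax T h n (T x)) m :=
      hT.integrable_comp_of_integrable (integrable_garsiaMax hT hi n)
    have h3 : ∫ x, (garsiaMax T h (n + 1) x - garsiaMax T h n (T x)) ∂m
        ≤ ∫ x, {x | 0 < garsiaMax T h (n + 1) x}.indicator h x ∂m := by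
      refine integral_mono ((integrable_garsiaMax hT hi (n + 1)).sub hcomp)
        (hi.indicator₀ (hset (n + 1))) fun x => ?_
      by_cases hx : 0 < garsiaMax T h (n + 1) x
      · have h4 : x ∈ {x | 0 < garsiaMax T h (n + 1) x} := hx
        simp only [Set.indicator_of_mem h4]
        have : garsiaMax T h (n + 1) x = h x + garsiaMax T h n (T x) := by
          have hd : garsiaMax T h (n + 1) x = max 0 (h x + garsiaMax T h n (T x)) := rfl
          rw [hd] at hx ⊢
          exact max_eq_right ((lt_max_iff.1 hx).resolve_left (lt_irrefl _)).le
        linarith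
      · have h4 : x ∉ {x | 0 < garsiaMax T h (n + 1) x} := hx
        simp only [Set.indicator_of_notMem h4]
        have := garsiaMax_nonneg T h n (T x)
        linarith
    rw [integral_sub (integrable_garsiaMax hT hi (n + 1)) hcomp, h1] at h3
    linarith
  have hlim : Tendsto
      (fun n => ∫ x, {x | 0 < garsiaMax T h (n + 1) x}.indicator h x ∂m) atTop
      (𝓝 (∫ x, h x ∂m)) := by
    refine tendsto_integral_of_dominated_convergence (fun x => ‖h x‖)
      (fun n => (hi.indicator₀ (hset (n + 1))).aestronglyMeasurable) hi.norm
      (fun n => Eventually.of_forall fun x => norm_indicator_le_norm_self _ _) ?_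
    filter_upwards [hpos] with x hx
    obtain ⟨N, hN⟩ := hx
    refine tendsto_const_nhds.congr' ?_
    filter_upwards [eventually_ge_atTop N] with n hn
    have h4 : x ∈ {x | 0 < garsiaMax T h (n + 1) x} :=
      (hN.trans_le (birkhoffSum_le_garsiaMax T h N x)).trans_le
        (garsiaMax_mono T h x (hn.trans (Nat.le_succ n)))
    rw [Set.indicator_of_mem h4]
  exact ge_of_tendsto' hlim key

lemma measurable_birkhoffSum {α : Type*} [MeasurableSpace α] {T : α → α} (hT : Measurable T)
    {h : α → ℝ} (hm : Measurable h) (n : ℕ) : Measurable (birkhoffSum T h n) := by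
  unfold birkhoffSum
  exact Finset.measurable_sum _ fun i _ => hm.comp (hT.iterate i)

lemma birkhoffSum_add_const {α : Type*} (T : α → α) (h : α → ℝ) (c : ℝ) (n : ℕ) (x : α) :
    birkhoffSum T (fun y => h y + c) n x = birkhoffSum T h n x + n * c := by
  simp [birkhoffSum, Finset.sum_add_distrib]

/-- For an ergodic transformation, Birkhoff sums of an observable of negative mean diverge
to `-∞`. -/
theorem Ergodic.birkhoffSum_tendsto_atBot {α : Type*} [MeasurableSpace α] {m : Measure α}
    [IsProbabilityMeasure m] {T : α → α} (hT : Ergodic T m) {h : α → ℝ} (hm : Measurable h)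
    (hi : Integrable h m) (hneg : ∫ x, h x ∂m < 0) :
    ∀ᵐ x ∂m, Tendsto (fun n => birkhoffSum T h n x) atTop atBot := by
  obtain ⟨ε, hε, hε'⟩ : ∃ ε : ℝ, 0 < ε ∧ ∫ x, h x ∂m + ε < 0 :=
    ⟨-(∫ x, h x ∂m) / 2, by linarith, by linarith⟩
  set g : α → ℝ := fun y => h y + ε with hg
  have hgm : Measurable g := hm.add_const ε
  have hgi : Integrable g m := hi.add (integrable_const ε)
  have hgint : ∫ x, g x ∂m < 0 := by
    rw [hg, integral_add hi (integrable_const ε)]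
    simpa using hε'
  set s : Set α := {x | ∃ k : ℕ, ∀ n, birkhoffSum T g n x ≤ k} with hs
  have hsm : MeasurableSet s := by
    have : s = ⋃ k : ℕ, ⋂ n, {x | birkhoffSum T g n x ≤ k} := by ext; simp [hs]
    rw [this]
    exact MeasurableSet.iUnion fun k => MeasurableSet.iInter fun n =>
      measurableSet_le (measurable_birkhoffSum hT.measurable hgm n) measurable_const
  have hinv : T ⁻¹' s = s := by
    ext x
    simp only [hs, Set.mem_preimage, Set.mem_ofPred_eq]
    constructor
    · rintro ⟨k, hk⟩
      obtain ⟨l, hl⟩ := exists_nat_ge (|g x| + k)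
      refine ⟨l, fun n => ?_⟩
      cases n with
      | zero => simp
      | succ n =>
        rw [birkhoffSum_succ']
        linarith [hk n, le_abs_self (g x)]
    · rintro ⟨k, hk⟩
      obtain ⟨l, hl⟩ := exists_nat_ge (|g x| + k)
      refine ⟨l, fun n => ?_⟩
      have := hk (n + 1)
      rw [birkhoffSum_succ'] at this
      linarith [neg_abs_le (g x)]
  rcases hT.toPreErgodic.ae_mem_or_ae_notMem hsm hinv with h1 | h1
  · filter_upwards [h1] with x ⟨k, hk⟩
    have h2 : Tendsto (fun n : ℕ => (k : ℝ) + -((n : ℝ) * ε)) atTop atBot :=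
      tendsto_atBot_add_const_left _ _
        (tendsto_neg_atTop_atBot.comp (tendsto_natCast_atTop_atTop.atTop_mul_const hε))
    refine tendsto_atBot_mono (fun n => ?_) h2
    have := hk n
    rw [hg, birkhoffSum_add_const] at this
    linarith
  · exfalso
    refine absurd (integral_nonneg_of_birkhoffSum_pos hT.toMeasurePreserving hgi ?_)
      (not_le.2 hgint)
    filter_upwards [h1] with x hx
    by_contra hcon
    push Not at hcon
    exact hx ⟨0, fun n => by simpa using hcon n⟩

/-! ### Contraction along fibres -/

/-- The logarithm of the slope of the first map applied along `ω`. -/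
noncomputable def logSlope (a b : ℝ) (ω : ℕ → Bool) : ℝ :=
  if ω 0 then Real.log b else Real.log a

lemma shiftMap_iterate (n : ℕ) (ω : ℕ → Bool) (i : ℕ) : (shiftMap^[n] ω) i = ω (i + n) := by
  induction n generalizing ω with
  | zero => rfl
  | succ n ih =>
    rw [Function.iterate_succ_apply, ih]
    simp only [shiftMap]
    congr 1

lemma skewMap_iterate_fst (a b : ℝ) (n : ℕ) (z : (ℕ → Bool) × ℝ≥0∞) :
    ((skewMap a b)^[n] z).1 = shiftMap^[n] z.1 := by
  induction n with
  | zero => rfl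
  | succ n ih => rw [Function.iterate_succ_apply', Function.iterate_succ_apply', ← ih]; rfl

lemma skewMap_iterate_succ_snd (a b : ℝ) (n : ℕ) (z : (ℕ → Bool) × ℝ≥0∞) :
    ((skewMap a b)^[n + 1] z).2 = Tmap a b (z.1 n) ((skewMap a b)^[n] z).2 := by
  rw [Function.iterate_succ_apply', skewMap, skewMap_iterate_fst, shiftMap_iterate, zero_add]

lemma foldl_eq_skewMap_iterate (a b : ℝ) (ω : ℕ → Bool) (x : ℝ≥0∞) (n : ℕ) :
    (List.ofFn fun j : Fin n => ω ↑j).foldl (fun z c => Tmap a b c z) x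
      = ((skewMap a b)^[n] (ω, x)).2 := by
  induction n with
  | zero => rfl
  | succ n ih =>
    rw [List.ofFn_succ', List.concat_eq_append, List.foldl_append, skewMap_iterate_succ_snd, ← ih]
    rfl

lemma Tmap_ne_top (a b : ℝ) (i : Bool) {x : ℝ≥0∞} (hx : x ≠ ⊤) : Tmap a b i x ≠ ⊤ := by
  unfold Tmap
  split_ifs
  · exact ENNReal.add_ne_top.2 ⟨ENNReal.mul_ne_top ENNReal.ofReal_ne_top hx, ENNReal.one_ne_top⟩
  · exact ENNReal.mul_ne_top ENNReal.ofReal_ne_top hx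

lemma skewMap_iterate_ne_top (a b : ℝ) (ω : ℕ → Bool) {x : ℝ≥0∞} (hx : x ≠ ⊤) (n : ℕ) :
    ((skewMap a b)^[n] (ω, x)).2 ≠ ⊤ := by
  induction n with
  | zero => exact hx
  | succ n ih => rw [skewMap_iterate_succ_snd]; exact Tmap_ne_top a b _ ih

/-- Two finite points driven by the same symbols have distance scaled by the product of slopes. -/
lemma abs_toReal_sub (a b : ℝ) (ha : 0 < a) (hb : 0 < b) (ω : ℕ → Bool) {x y : ℝ≥0∞}
    (hx : x ≠ ⊤) (hy : y ≠ ⊤) (n : ℕ) :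
    |((skewMap a b)^[n] (ω, x)).2.toReal - ((skewMap a b)^[n] (ω, y)).2.toReal|
      = Real.exp (birkhoffSum shiftMap (logSlope a b) n ω) * |x.toReal - y.toReal| := by
  induction n with
  | zero => simp
  | succ n ih =>
    have hX := skewMap_iterate_ne_top a b ω hx n
    have hY := skewMap_iterate_ne_top a b ω hy n
    rw [skewMap_iterate_succ_snd, skewMap_iterate_succ_snd, birkhoffSum_succ, Real.exp_add]
    generalize ((skewMap a b)^[n] (ω, x)).2 = X at ih hX ⊢
    generalize ((skewMap a b)^[n] (ω, y)).2 = Y at ih hY ⊢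
    simp only [logSlope, shiftMap_iterate, zero_add, Tmap]
    rw [mul_right_comm, ← ih]
    rcases Bool.eq_false_or_eq_true (ω n) with hc | hc
    swap
    · simp only [hc, Bool.false_eq_true, if_false, ENNReal.toReal_mul, ENNReal.toReal_ofReal ha.le,
        Real.exp_log ha]
      rw [← mul_sub, abs_mul, abs_of_pos ha, mul_comm]
    · have hX' := ENNReal.mul_ne_top (ENNReal.ofReal_ne_top (r := b)) hX
      have hY' := ENNReal.mul_ne_top (ENNReal.ofReal_ne_top (r := b)) hY
      simp only [hc, if_true, ENNReal.toReal_add hX' ENNReal.one_ne_top,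
        ENNReal.toReal_add hY' ENNReal.one_ne_top, ENNReal.toReal_mul,
        ENNReal.toReal_ofReal hb.le, Real.exp_log hb]
      rw [add_sub_add_right_eq_sub, ← mul_sub, abs_mul, abs_of_pos hb, mul_comm]

/-- A continuous function on the compactification is uniformly continuous for the Euclidean
distance on its finite part. -/
lemma uniformContinuous_coe_nnreal {f : ℝ≥0∞ → ℝ} (hf : Continuous f) :
    UniformContinuous fun t : NNReal => f t := by
  refine (hf.comp ENNReal.continuous_coe).uniformContinuous_of_tendsto_cocompact (x := f ⊤) ?_
  rw [cocompact_eq_atTop]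
  exact (hf.tendsto ⊤).comp (ENNReal.tendsto_coe_nhds_top.2 tendsto_id)

/-- Birkhoff averages of the observable `f` of the second coordinate under the skew product. -/
noncomputable def pathAverage (a b : ℝ) (f : ℝ≥0∞ → ℝ) (n : ℕ) (z : (ℕ → Bool) × ℝ≥0∞) : ℝ :=
  birkhoffAverage ℝ (skewMap a b) (fun w => f w.2) n z

/-- The symbol sequences whose products of slopes tend to zero. -/
def IsContracting (a b : ℝ) (ω : ℕ → Bool) : Prop :=
  Tendsto (fun n => birkhoffSum shiftMap (logSlope a b) n ω) atTop atBot

lemma IsContracting.tendsto_pathAverage_sub {a b : ℝ} (ha : 0 < a) (hb : 0 < b) {ω : ℕ → Bool}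
    (hω : IsContracting a b ω) {x y : ℝ≥0∞} (hx : x ≠ ⊤) (hy : y ≠ ⊤) {f : ℝ≥0∞ → ℝ}
    (hf : Continuous f) :
    Tendsto (fun n => pathAverage a b f n (ω, x) - pathAverage a b f n (ω, y)) atTop (𝓝 0) := by
  have hdist : Tendsto (fun n => dist ((skewMap a b)^[n] (ω, x)).2.toNNReal
      ((skewMap a b)^[n] (ω, y)).2.toNNReal) atTop (𝓝 0) := by
    have h1 := (Real.tendsto_exp_atBot.comp hω).mul_const |x.toReal - y.toReal|
    rw [zero_mul] at h1
    refine h1.congr fun n => ?_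
    exact (abs_toReal_sub a b ha hb ω hx hy n).symm
  have hdiff : Tendsto (fun n => f ((skewMap a b)^[n] (ω, x)).2 - f ((skewMap a b)^[n] (ω, y)).2)
      atTop (𝓝 0) := by
    rw [Metric.tendsto_atTop] at hdist ⊢
    intro ε hε
    obtain ⟨δ, hδ, H⟩ := Metric.uniformContinuous_iff.1 (uniformContinuous_coe_nnreal hf) ε hε
    obtain ⟨N, hN⟩ := hdist δ hδ
    refine ⟨N, fun n hn => ?_⟩
    have h2 := hN n hn
    rw [Real.dist_0_eq_abs, abs_of_nonneg dist_nonneg] at h2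
    have h3 := H h2
    simp only [ENNReal.coe_toNNReal (skewMap_iterate_ne_top a b ω hx n),
      ENNReal.coe_toNNReal (skewMap_iterate_ne_top a b ω hy n)] at h3
    rwa [Real.dist_eq, sub_zero, ← Real.dist_eq]
  refine hdiff.cesaro.congr fun n => ?_
  simp only [pathAverage, birkhoffAverage, birkhoffSum, smul_eq_mul, Finset.sum_sub_distrib,
    mul_sub]

lemma measurable_shiftMap : Measurable shiftMap :=
  measurable_pi_iff.2 fun i => measurable_pi_apply (i + 1)

lemma measurable_logSlope (a b : ℝ) : Measurable (logSlope a b) :=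
  (measurable_of_countable fun c : Bool => if c then Real.log b else Real.log a).comp
    (measurable_pi_apply 0)

lemma measurable_skewMap (a b : ℝ) : Measurable (skewMap a b) := by
  refine (measurable_shiftMap.comp measurable_fst).prodMk ?_
  have h0 : Measurable fun z : (ℕ → Bool) × ℝ≥0∞ => z.1 0 :=
    (measurable_pi_apply 0).comp measurable_fst
  exact Measurable.ite (h0 (MeasurableSet.singleton true))
    ((measurable_snd.const_mul _).add_const _) (measurable_snd.const_mul _)

lemma integrable_logSlope (a b : ℝ) (ν : Measure (ℕ → Bool)) [IsProbabilityMeasure ν] :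
    Integrable (logSlope a b) ν := by
  refine Integrable.of_bound (measurable_logSlope a b).aestronglyMeasurable
    (|Real.log a| + |Real.log b|) (Eventually.of_forall fun ω => ?_)
  unfold logSlope
  split_ifs <;> simp

/-- The Lyapunov exponent is the mean of the logarithmic slope. -/
lemma integral_logSlope (a b : ℝ) (ν : Measure (ℕ → Bool)) [IsProbabilityMeasure ν] :
    ∫ ω, logSlope a b ω ∂ν = lyap a b ν := by
  have hms : ∀ c : Bool, MeasurableSet {ω : ℕ → Bool | ω 0 = c} := fun c =>
    (measurable_pi_apply 0 : Measurable fun ω : ℕ → Bool => ω 0) (MeasurableSet.singleton c)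
  have hdec : logSlope a b = fun ω =>
      {ω : ℕ → Bool | ω 0 = false}.indicator (fun _ => Real.log a) ω
        + {ω : ℕ → Bool | ω 0 = true}.indicator (fun _ => Real.log b) ω := by
    funext ω
    cases h : ω 0 <;> simp [logSlope, h]
  rw [hdec, integral_add ((integrable_const _).indicator (hms _))
    ((integrable_const _).indicator (hms _)), integral_indicator_const _ (hms _),
    integral_indicator_const _ (hms _)]
  rfl

theorem ae_isContracting (a b : ℝ) (ν : Measure (ℕ → Bool)) [IsProbabilityMeasure ν]
    (hν : Ergodic shiftMap ν) (hlyap : lyap a b ν < 0) : ∀ᵐ ω ∂ν, IsContracting a b ω :=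
  hν.birkhoffSum_tendsto_atBot (measurable_logSlope a b) (integrable_logSlope a b ν)
    (by rwa [integral_logSlope])

/-! ### Time averages along a path -/

/-- The upper limit of `u` is at least `c`. -/
def FreqAbove (c : ℝ) (u : ℕ → ℝ) : Prop :=
  ∀ k : ℕ, ∃ᶠ n in atTop, c - 1 / ((k : ℝ) + 1) < u n

lemma FreqAbove.of_tendsto_sub {c : ℝ} {u v : ℕ → ℝ} (hu : FreqAbove c u)
    (h : Tendsto (fun n => u n - v n) atTop (𝓝 0)) : FreqAbove c v := by
  intro k
  have hk : (0 : ℝ) < (k : ℝ) + 1 := by positivity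
  have h1 : ∀ᶠ n in atTop, u n - v n < 1 / (((2 * k + 1 : ℕ) : ℝ) + 1) :=
    h.eventually_lt_const (by positivity)
  have h2 : 1 / (((2 * k + 1 : ℕ) : ℝ) + 1) = 1 / ((k : ℝ) + 1) / 2 := by
    push_cast
    field_simp
    ring
  refine ((hu (2 * k + 1)).and_eventually h1).mono fun n hn => ?_
  rw [h2] at hn
  linarith [hn.1, hn.2]

lemma FreqAbove.congr_tendsto_sub {c : ℝ} {u v : ℕ → ℝ}
    (h : Tendsto (fun n => u n - v n) atTop (𝓝 0)) : FreqAbove c u ↔ FreqAbove c v :=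
  ⟨fun hu => hu.of_tendsto_sub h, fun hv => hv.of_tendsto_sub (by simpa using h.neg)⟩

lemma tendsto_pathAverage_skewMap_sub (a b : ℝ) {f : ℝ≥0∞ → ℝ} (hf : Continuous f)
    (z : (ℕ → Bool) × ℝ≥0∞) :
    Tendsto (fun n => pathAverage a b f n (skewMap a b z) - pathAverage a b f n z)
      atTop (𝓝 0) := by
  refine tendsto_birkhoffAverage_apply_sub_birkhoffAverage' ℝ ?_ (skewMap a b) z
  exact (isCompact_range hf).isBounded.subset (Set.range_comp_subset_range Prod.snd f)

lemma measurable_pathAverage_zero (a b : ℝ) {f : ℝ≥0∞ → ℝ} (hf : Continuous f) (n : ℕ) :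
    Measurable fun ω : ℕ → Bool => pathAverage a b f n (ω, 0) := by
  have h1 : Measurable (pathAverage a b f n) :=
    (measurable_birkhoffSum (measurable_skewMap a b) (hf.measurable.comp measurable_snd) n).const_smul
      ((n : ℝ)⁻¹)
  exact h1.comp (measurable_id.prodMk measurable_const)

lemma integrable_of_continuous_compact {f : ℝ≥0∞ → ℝ} (hf : Continuous f) (μ : Measure ℝ≥0∞)
    [IsProbabilityMeasure μ] : Integrable f μ := by
  obtain ⟨C, hC⟩ := (isCompact_range hf).isBounded.exists_norm_le
  exact Integrable.of_bound hf.measurable.aestronglyMeasurable C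
    (Eventually.of_forall fun x => hC _ ⟨x, rfl⟩)

/-- Upper half of the ergodic theorem for the path started at `0`. By contraction, the upper limit
of the averages depends on `ω` only, hence it is a constant; the maximal inequality on the skew
product bounds this constant by the space average. -/
theorem ae_eventually_pathAverage_le (a b : ℝ) (ha : 0 < a) (hb : 0 < b)
    (ν : Measure (ℕ → Bool)) [IsProbabilityMeasure ν] (hν : Ergodic shiftMap ν)
    (hlyap : lyap a b ν < 0) (μ : Measure ℝ≥0∞) (hμ : IsInvariantFor a b ν μ)
    {f : ℝ≥0∞ → ℝ} (hf : Continuous f) {ε : ℝ} (hε : 0 < ε) :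
    ∀ᵐ ω ∂ν, ∀ᶠ n in atTop, pathAverage a b f n (ω, 0) ≤ ∫ y, f y ∂μ + ε := by
  obtain ⟨hμp, hμtop, κ, hκp, hκ, hκ1, hκ2⟩ := hμ
  set c : ℝ := ∫ y, f y ∂μ + ε with hc
  set s : Set (ℕ → Bool) := {ω | FreqAbove c fun n => pathAverage a b f n (ω, 0)} with hs
  have hsm : MeasurableSet s := by
    have : s = ⋂ k : ℕ, ⋂ N : ℕ, ⋃ n : ℕ, ⋃ _ : N ≤ n,
        {ω | c - 1 / ((k : ℝ) + 1) < pathAverage a b f n (ω, 0)} := by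
      ext ω
      simp [hs, FreqAbove, Filter.frequently_atTop]
    rw [this]
    exact MeasurableSet.iInter fun k => MeasurableSet.iInter fun N => MeasurableSet.iUnion fun n =>
      MeasurableSet.iUnion fun _ =>
        measurableSet_lt measurable_const (measurable_pathAverage_zero a b hf n)
  have hcontr := ae_isContracting a b ν hν hlyap
  have hinv : shiftMap ⁻¹' s =ᵐ[ν] s := by
    filter_upwards [hν.quasiMeasurePreserving.ae hcontr] with ω hω
    have h1 := hω.tendsto_pathAverage_sub ha hb ENNReal.zero_ne_top
      (Tmap_ne_top a b (ω 0) ENNReal.zero_ne_top) hf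
    have h2 := tendsto_pathAverage_skewMap_sub a b hf (ω, 0)
    have h3 : Tendsto (fun n => pathAverage a b f n (shiftMap ω, 0) - pathAverage a b f n (ω, 0))
        atTop (𝓝 0) := by
      have := h1.add h2
      rw [add_zero] at this
      refine this.congr fun n => ?_
      simp only [skewMap]
      ring
    exact propext (FreqAbove.congr_tendsto_sub h3)
  rcases hν.quasiErgodic.ae_empty_or_univ₀ hsm.nullMeasurableSet hinv with h0 | h1
  · filter_upwards [h0] with ω hω
    have hω' : ¬ FreqAbove c fun n => pathAverage a b f n (ω, 0) := by
      intro h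
      have : ω ∈ (∅ : Set (ℕ → Bool)) := (iff_of_eq hω).1 h
      exact this
    simp only [FreqAbove, not_forall, Filter.not_frequently, not_lt] at hω'
    obtain ⟨k, hk⟩ := hω'
    filter_upwards [hk] with n hn
    have : 0 < 1 / ((k : ℝ) + 1) := by positivity
    linarith
  · exfalso
    have hsae : ∀ᵐ ω ∂ν, ω ∈ s := by
      filter_upwards [h1] with ω hω
      exact (iff_of_eq hω).2 (Set.mem_univ ω)
    have hgood : ∀ᵐ z ∂κ, z.1 ∈ s ∧ IsContracting a b z.1 := by
      refine ae_of_ae_map (f := Prod.fst) (p := fun ω => ω ∈ s ∧ IsContracting a b ω)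
        measurable_fst.aemeasurable ?_
      rw [hκ1]
      exact hsae.and hcontr
    have hfin : ∀ᵐ z ∂κ, z.2 ≠ ⊤ := by
      refine ae_of_ae_map (f := Prod.snd) (p := fun x : ℝ≥0∞ => x ≠ ⊤)
        measurable_snd.aemeasurable ?_
      rw [hκ2, ae_iff]
      simpa using hμtop
    have hint : Integrable (fun z : (ℕ → Bool) × ℝ≥0∞ => f z.2) κ := by
      have h := integrable_of_continuous_compact hf μ
      rw [← hκ2] at h
      exact h.comp_measurable measurable_snd
    have hintval : ∫ z, f z.2 ∂κ = ∫ y, f y ∂μ := by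
      rw [← hκ2, integral_map measurable_snd.aemeasurable hf.measurable.aestronglyMeasurable]
    obtain ⟨k, hk⟩ := exists_nat_one_div_lt hε
    -- `q` lies strictly between the space average and the assumed upper limit `c`
    set q : ℝ := c - 1 / ((k : ℝ) + 1) with hq
    have hnonneg := integral_nonneg_of_birkhoffSum_pos hκ (h := fun z => f z.2 + -q)
      (hint.add (integrable_const (-q))) (by
        filter_upwards [hgood, hfin] with z hz hz2
        have h4 : FreqAbove c fun n => pathAverage a b f n z :=
          FreqAbove.of_tendsto_sub hz.1
            (hz.2.tendsto_pathAverage_sub ha hb ENNReal.zero_ne_top hz2 hf)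
        obtain ⟨n, hn, hn0⟩ := ((h4 k).and_eventually (eventually_gt_atTop 0)).exists
        refine ⟨n, ?_⟩
        have hn0' : (0 : ℝ) < n := by exact_mod_cast hn0
        rw [birkhoffSum_add_const (skewMap a b) (fun z => f z.2)]
        simp only [pathAverage, birkhoffAverage, smul_eq_mul] at hn
        rw [lt_inv_mul_iff₀ hn0'] at hn
        linarith)
    rw [integral_add hint (integrable_const _), hintval] at hnonneg
    simp only [integral_const, probReal_univ, one_smul] at hnonneg
    linarith

theorem ae_tendsto_pathAverage_zero (a b : ℝ) (ha : 0 < a) (hb : 0 < b)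
    (ν : Measure (ℕ → Bool)) [IsProbabilityMeasure ν] (hν : Ergodic shiftMap ν)
    (hlyap : lyap a b ν < 0) (μ : Measure ℝ≥0∞) (hμ : IsInvariantFor a b ν μ)
    {f : ℝ≥0∞ → ℝ} (hf : Continuous f) :
    ∀ᵐ ω ∂ν, Tendsto (fun n => pathAverage a b f n (ω, 0)) atTop (𝓝 (∫ y, f y ∂μ)) := by
  have hup : ∀ᵐ ω ∂ν, ∀ k : ℕ, ∀ᶠ n in atTop,
      pathAverage a b f n (ω, 0) ≤ ∫ y, f y ∂μ + 1 / ((k : ℝ) + 1) :=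
    ae_all_iff.2 fun k =>
      ae_eventually_pathAverage_le a b ha hb ν hν hlyap μ hμ hf (by positivity)
  have hlow : ∀ᵐ ω ∂ν, ∀ k : ℕ, ∀ᶠ n in atTop,
      pathAverage a b (fun y => -f y) n (ω, 0) ≤ ∫ y, -f y ∂μ + 1 / ((k : ℝ) + 1) :=
    ae_all_iff.2 fun k =>
      ae_eventually_pathAverage_le a b ha hb ν hν hlyap μ hμ hf.neg (by positivity)
  filter_upwards [hup, hlow] with ω h1 h2
  rw [Metric.tendsto_nhds]
  intro ε hε
  obtain ⟨k, hk⟩ := exists_nat_one_div_lt hε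
  filter_upwards [h1 k, h2 k] with n hn1 hn2
  have hneg : pathAverage a b (fun y => -f y) n (ω, 0) = -pathAverage a b f n (ω, 0) := by
    simp [pathAverage, birkhoffAverage, birkhoffSum]
  rw [hneg, integral_neg] at hn2
  rw [Real.dist_eq, abs_lt]
  constructor <;> linarith

lemma dist_pathAverage_le (a b : ℝ) {f g : ℝ≥0∞ → ℝ} {δ : ℝ} (hδ : 0 ≤ δ)
    (h : ∀ y, |f y - g y| ≤ δ) (n : ℕ) (z : (ℕ → Bool) × ℝ≥0∞) :
    |pathAverage a b f n z - pathAverage a b g n z| ≤ δ := by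
  simp only [pathAverage, birkhoffAverage, birkhoffSum, smul_eq_mul]
  rw [← mul_sub, ← Finset.sum_sub_distrib, abs_mul, abs_inv, Nat.abs_cast]
  rcases Nat.eq_zero_or_pos n with rfl | hn
  · simpa using hδ
  · rw [inv_mul_le_iff₀ (by exact_mod_cast hn)]
    refine (Finset.abs_sum_le_sum_abs _ _).trans ?_
    simpa using Finset.sum_le_card_nsmul (Finset.range n) _ δ fun i _ => h _

/-- The exceptional null set can be chosen independently of `f`, since the space of continuous
functions on the compact space `[0,∞]` is separable for the uniform distance. -/
theorem ae_forall_tendsto_pathAverage_zero (a b : ℝ) (ha : 0 < a) (hb : 0 < b)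
    (ν : Measure (ℕ → Bool)) [IsProbabilityMeasure ν] (hν : Ergodic shiftMap ν)
    (hlyap : lyap a b ν < 0) (μ : Measure ℝ≥0∞) (hμ : IsInvariantFor a b ν μ) :
    ∀ᵐ ω ∂ν, ∀ f : C(ℝ≥0∞, ℝ),
      Tendsto (fun n => pathAverage a b f n (ω, 0)) atTop (𝓝 (∫ y, f y ∂μ)) := by
  have hμp : IsProbabilityMeasure μ := hμ.1
  have hall : ∀ᵐ ω ∂ν, ∀ j : ℕ, Tendsto
      (fun n => pathAverage a b (TopologicalSpace.denseSeq C(ℝ≥0∞, ℝ) j) n (ω, 0)) atTop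
      (𝓝 (∫ y, TopologicalSpace.denseSeq C(ℝ≥0∞, ℝ) j y ∂μ)) :=
    ae_all_iff.2 fun j => ae_tendsto_pathAverage_zero a b ha hb ν hν hlyap μ hμ
      (TopologicalSpace.denseSeq C(ℝ≥0∞, ℝ) j).continuous
  filter_upwards [hall] with ω hω f
  rw [Metric.tendsto_nhds]
  intro ε hε
  obtain ⟨j, hj⟩ := (TopologicalSpace.denseRange_denseSeq C(ℝ≥0∞, ℝ)).exists_dist_lt f
    (show 0 < ε / 3 by positivity)
  set g := TopologicalSpace.denseSeq C(ℝ≥0∞, ℝ) j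
  have hfg : ∀ y, |f y - g y| ≤ ε / 3 := fun y => (ContinuousMap.dist_apply_le_dist y).trans hj.le
  have hint : |∫ y, f y ∂μ - ∫ y, g y ∂μ| ≤ ε / 3 := by
    rw [← integral_sub (integrable_of_continuous_compact f.continuous μ)
      (integrable_of_continuous_compact g.continuous μ), ← Real.norm_eq_abs]
    simpa using norm_integral_le_of_norm_le_const (μ := μ) (f := fun y => f y - g y)
      (Eventually.of_forall hfg)
  filter_upwards [Metric.tendsto_nhds.1 (hω j) (ε / 3) (by positivity)] with n hn
  have hav := dist_pathAverage_le a b (by positivity) hfg n (ω, 0)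
  rw [Real.dist_eq, abs_lt] at *
  rw [abs_le] at hint hav
  constructor <;> linarith [hint.1, hint.2, hav.1, hav.2, hn.1, hn.2]

/-- **Theorem F / Theorem 4.3 (individual paths).** Let `ν` be ergodic `σ`-invariant
with `λ(ν) < 0` and let `μ` be the measure invariant for `(T₀, T₁, ν)`. Then for
`ν`-a.e. `ω̄ ∈ Σ`, every `x ∈ ℝ₊` and every continuous `f : ℝ̄₊ → ℝ`,
`(1/n)·Σ_{i<n} f(x_i) → ∫ f dμ`, where `x₀ = x` and
`x_i = T_{ω_{i−1}} ∘ ⋯ ∘ T_{ω₀}(x)`. -/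
theorem individual_paths (a b : ℝ) (ha : 0 < a) (ha1 : a < 1) (hb : 1 < b)
    (ν : Measure (ℕ → Bool)) [IsProbabilityMeasure ν] (hν : Ergodic shiftMap ν)
    (hlyap : lyap a b ν < 0)
    (μ : Measure ℝ≥0∞) (hμ : IsInvariantFor a b ν μ) :
    ∀ᵐ ωb ∂ν, ∀ x : ℝ≥0∞, x ≠ ⊤ → ∀ f : ℝ≥0∞ → ℝ, Continuous f →
      Tendsto (fun n : ℕ => (1 / (n : ℝ)) * ∑ i ∈ Finset.range n,
          f ((List.ofFn fun j : Fin i => ωb ↑j).foldl (fun z c => Tmap a b c z) x))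
        atTop (nhds (∫ y, f y ∂μ)) := by
  have hb0 : 0 < b := zero_lt_one.trans hb
  filter_upwards [ae_forall_tendsto_pathAverage_zero a b ha hb0 ν hν hlyap μ hμ,
    ae_isContracting a b ν hν hlyap] with ω hω hcontr x hx f hf
  have h1 := (hcontr.tendsto_pathAverage_sub ha hb0 hx ENNReal.zero_ne_top hf).add (hω ⟨f, hf⟩)
  rw [zero_add] at h1
  refine h1.congr fun n => ?_
  simp only [foldl_eq_skewMap_iterate, one_div]
  exact sub_add_cancel _ _
end

section
/- Fix γ > 1, let I = [(γ−1)/b, γ/a] and define T : I → I by T(x) = x/a if (γ−1)/b ≤ x < γ and T(x) = (x−1)/b if γ ≤ x ≤ γ/a. Then there exists a T-invariant Borel probability measure μ on I which is absolutely continuous with respect to Lebesgue measure; moreover μ is ergodic for T, μ is the unique T-invariant Borel probability measure absolutely continuous with respect to Lebesgue measure, and the support of μ is a union of finitely many intervals, one of which contains γ in its interior. -/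
/-!
Write `κ = 1 / (2 (b - 1))`. Although the right branch of `T` contracts Lebesgue measure by the
factor `b`, both branches uniformly expand the metric `dx / (x + κ)` on `I`, because `-κ` lies
strictly between the fixed points of the two branches (`Par.rate_left`, `Par.rate_right`). So `T` is
a piecewise expanding map with a single cut, at `γ`; since the branches are affine there is no
distortion to control.

Existence. For an interval `(u, v)` let `F n u v` be the sum of the inverse slopes of the branches
of the `n`-th iterate of `T` on it. A short interval is cut at most once during a fixed number of
iterations, and its pieces are strongly expanded, which gives a Lasota–Yorke inequality
(`lasota_yorke`) and a bound on `F n` that is uniform in `n` (`exists_bound`). Hence the push-forwards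
of Lebesgue measure on `I` have uniformly bounded densities (`volume_preimage_le`). The limit of
their averages along an ultrafilter on `ℕ` is therefore countably additive and absolutely continuous,
and it is invariant (`exists_acip`).

Ergodicity and uniqueness. The same induction shows that outside a set of measure `O(ε)`, uniformly
in `n`, the `n`-th iterate maps a small neighbourhood of a point affinely onto an interval of radius
`ε` (`volume_not_good_le`). Blowing up at a density point, a forward invariant set of positive measure
contains an interval up to null sets; the images of that interval grow until one of them contains `γ`
(`exists_hit`). So every such set has full measure near `γ` (`exists_full_nhds`), and two of them
cannot be disjoint. This gives ergodicity of every absolutely continuous invariant probability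
measure (`Acip.ergodic`), hence uniqueness (`Acip.unique`).

Support. The support is closed and forward invariant off `γ`, so it contains an interval around `γ`.
Let `[p, q]` be its component at `γ`. The images of `[p, γ]` and of `[γ, q]` remain in the support
until they contain `γ`, and then lie in `[p, q]` by maximality. The finitely many intervals met before
that, with `[p, q]`, form an invariant set of positive measure, which is the support by ergodicity
(`Acip.support_eq`).
-/

open MeasureTheory

/-- The piecewise-affine map of Section 5: on `I = [(γ−1)/b, γ/a]` it is given by
`T(x) = x/a` for `(γ−1)/b ≤ x < γ` and `T(x) = (x−1)/b` for `γ ≤ x ≤ γ/a`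
(we extend it to all of `ℝ` by the same formulas). -/
noncomputable def Tinv (a b γ : ℝ) (x : ℝ) : ℝ := if x < γ then x / a else (x - 1) / b

open Set Filter Topology
open scoped ENNReal

namespace LorenzMap

/-- The standing assumptions on the parameters. -/
structure Par (a b γ : ℝ) : Prop where
  ha : 0 < a
  ha1 : a < 1
  hb : 1 < b
  hγ : 1 < γ

/-- Left endpoint of `I`; it is the image of `γ` under the right branch. -/
noncomputable def lo (b γ : ℝ) : ℝ := (γ - 1) / b

/-- Right endpoint of `I`; it is the image of `γ` under the left branch. -/
noncomputable def hi (a γ : ℝ) : ℝ := γ / a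

/-- A shift `κ` such that the metric `dx / (x + κ)` is expanded by both branches: `-κ` lies
strictly between the fixed points `-1 / (b - 1)` and `0` of the two affine branches. -/
noncomputable def kap (b : ℝ) : ℝ := 1 / (2 * (b - 1))

/-- The inverse of a common lower bound for the expansion of both branches in the metric
`dx / (x + κ)`. -/
noncomputable def rate (a b γ : ℝ) : ℝ :=
  1 - min ((1 - a) * kap b) (1 / 2) / (hi a γ + kap b)

/-- `Valid a b γ u v`: the interval `(u, v)` is non-degenerate and contained in `I`. -/
structure Valid (a b γ u v : ℝ) : Prop where
  lo_le : lo b γ ≤ u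
  lt : u < v
  le_hi : v ≤ hi a γ

variable {a b γ : ℝ}

lemma Par.b_pos (h : Par a b γ) : 0 < b := by linarith [h.hb]

lemma Par.lo_pos (h : Par a b γ) : 0 < lo b γ :=
  div_pos (by linarith [h.hγ]) h.b_pos

lemma Par.lo_lt (h : Par a b γ) : lo b γ < γ := by
  have := h.hb
  have := h.hγ
  rw [lo, div_lt_iff₀ h.b_pos]
  nlinarith

lemma Par.lt_hi (h : Par a b γ) : γ < hi a γ := by
  have := h.ha1
  have := h.hγ
  rw [hi, lt_div_iff₀ h.ha]
  nlinarith

lemma Par.valid (h : Par a b γ) : Valid a b γ (lo b γ) (hi a γ) :=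
  ⟨le_rfl, h.lo_lt.trans h.lt_hi, le_rfl⟩

lemma Par.kap_pos (h : Par a b γ) : 0 < kap b := by
  have := h.hb
  unfold kap
  apply one_div_pos.2
  linarith

lemma Par.kap_eq (h : Par a b γ) : b * kap b = kap b + 1 / 2 := by
  have := h.hb
  have h0 : b - 1 ≠ 0 := by linarith
  unfold kap
  field_simp
  ring

lemma Par.hi_kap_pos (h : Par a b γ) : 0 < hi a γ + kap b := by
  linarith [h.kap_pos, h.lt_hi, h.hγ]

lemma Par.rate_lt_one (h : Par a b γ) : rate a b γ < 1 := by
  have h1 : 0 < (1 - a) * kap b := mul_pos (by linarith [h.ha1]) h.kap_pos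
  have := div_pos (lt_min h1 (one_half_pos (α := ℝ))) h.hi_kap_pos
  unfold rate
  linarith

lemma Par.rate_pos (h : Par a b γ) : 0 < rate a b γ := by
  have h1 : (1 - a) * kap b < hi a γ + kap b := by
    nlinarith [h.kap_pos, h.ha, h.lt_hi, h.hγ]
  have : min ((1 - a) * kap b) (1 / 2) / (hi a γ + kap b) < 1 := by
    rw [div_lt_one h.hi_kap_pos]
    exact (min_le_left _ _).trans_lt h1
  unfold rate
  linarith

lemma Par.rate_aux (h : Par a b γ) {x : ℝ} (hx : x ≤ hi a γ) :
    x + kap b - min ((1 - a) * kap b) (1 / 2) ≤ rate a b γ * (x + kap b) := by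
  have h1 : 0 < (1 - a) * kap b := mul_pos (by linarith [h.ha1]) h.kap_pos
  have hm := lt_min h1 (one_half_pos (α := ℝ))
  have h2 : min ((1 - a) * kap b) (1 / 2) / (hi a γ + kap b) * (x + kap b)
      ≤ min ((1 - a) * kap b) (1 / 2) := by
    rw [div_mul_eq_mul_div, div_le_iff₀ h.hi_kap_pos]
    gcongr
  unfold rate
  linarith

/-- The left branch expands the metric `dx / (x + κ)`. -/
lemma Par.rate_left (h : Par a b γ) {x : ℝ} (hx : x ≤ hi a γ) :
    a * (x / a + kap b) ≤ rate a b γ * (x + kap b) := by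
  have h1 : a * (x / a + kap b) = x + kap b - (1 - a) * kap b := by
    have := h.ha.ne'
    field_simp
    ring
  have := h.rate_aux hx
  have := min_le_left ((1 - a) * kap b) (1 / 2)
  linarith

/-- The right branch expands the metric `dx / (x + κ)`. -/
lemma Par.rate_right (h : Par a b γ) {x : ℝ} (hx : x ≤ hi a γ) :
    b * ((x - 1) / b + kap b) ≤ rate a b γ * (x + kap b) := by
  have h1 : b * ((x - 1) / b + kap b) = x + kap b - 1 / 2 := by
    have h0 := h.b_pos.ne'
    rw [mul_add, mul_div_cancel₀ _ h0, h.kap_eq]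
    ring
  have := h.rate_aux hx
  have := min_le_right ((1 - a) * kap b) (1 / 2)
  linarith

lemma Valid.left (h : Par a b γ) {u v : ℝ} (hv : Valid a b γ u v) (hvγ : v ≤ γ) :
    Valid a b γ (u / a) (v / a) := by
  have ha := h.ha
  refine ⟨?_, by gcongr; exact hv.lt, by unfold hi; gcongr⟩
  rw [le_div_iff₀ ha]
  nlinarith [hv.lo_le, h.lo_pos, h.ha1]

lemma Valid.cut_left (h : Par a b γ) {u v : ℝ} (hv : Valid a b γ u v) (huγ : u < γ) :
    Valid a b γ (u / a) (hi a γ) := by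
  have ha := h.ha
  refine ⟨?_, by unfold hi; gcongr, le_rfl⟩
  rw [le_div_iff₀ ha]
  nlinarith [hv.lo_le, h.lo_pos, h.ha1]

lemma Par.right_le (h : Par a b γ) {v : ℝ} (hv : v ≤ hi a γ) : (v - 1) / b ≤ hi a γ := by
  rw [div_le_iff₀ h.b_pos]
  nlinarith [h.hb, h.lt_hi, h.hγ]

lemma Valid.right (h : Par a b γ) {u v : ℝ} (hv : Valid a b γ u v) (huγ : γ ≤ u) :
    Valid a b γ ((u - 1) / b) ((v - 1) / b) := by
  have hb := h.b_pos
  exact ⟨by unfold lo; gcongr, by gcongr; exact hv.lt, h.right_le hv.le_hi⟩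

lemma Valid.cut_right (h : Par a b γ) {u v : ℝ} (hv : Valid a b γ u v) (hvγ : γ < v) :
    Valid a b γ (lo b γ) ((v - 1) / b) := by
  have hb := h.b_pos
  exact ⟨le_rfl, by unfold lo; gcongr, h.right_le hv.le_hi⟩

/-! ### The transfer operator on interval functions -/

/-- One step of the dynamics on functions of intervals: `(u, v)` is cut at `γ` if necessary and
replaced by the images of its pieces, each weighted by the inverse of the slope. Iterating it on
the constant `1` sums the inverse slopes of the branches of an iterate of `T` on `(u, v)`. -/
noncomputable def P (a b γ : ℝ) (φ : ℝ → ℝ → ℝ) (u v : ℝ) : ℝ :=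
  if v ≤ γ then a * φ (u / a) (v / a)
  else if γ ≤ u then b * φ ((u - 1) / b) ((v - 1) / b)
  else a * φ (u / a) (hi a γ) + b * φ (lo b γ) ((v - 1) / b)

/-- The sum of the inverse slopes of the branches of the `n`-th iterate of `T` on `(u, v)`. -/
noncomputable def F (a b γ : ℝ) (n : ℕ) : ℝ → ℝ → ℝ := (P a b γ)^[n] 1

lemma F_zero (u v : ℝ) : F a b γ 0 u v = 1 := rfl

lemma F_succ (n : ℕ) : F a b γ (n + 1) = P a b γ (F a b γ n) :=
  Function.iterate_succ_apply' _ _ _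

lemma F_left (n : ℕ) {u v : ℝ} (hv : v ≤ γ) :
    F a b γ (n + 1) u v = a * F a b γ n (u / a) (v / a) := by
  rw [F_succ, P, if_pos hv]

lemma F_right (n : ℕ) {u v : ℝ} (hu : γ ≤ u) (huv : u < v) :
    F a b γ (n + 1) u v = b * F a b γ n ((u - 1) / b) ((v - 1) / b) := by
  rw [F_succ, P, if_neg (by linarith), if_pos hu]

lemma F_cut (n : ℕ) {u v : ℝ} (hu : u < γ) (hv : γ < v) :
    F a b γ (n + 1) u v =
      a * F a b γ n (u / a) (hi a γ) + b * F a b γ n (lo b γ) ((v - 1) / b) := by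
  rw [F_succ, P, if_neg (by linarith), if_neg (by linarith)]

/-- The operator `P` is positive. -/
lemma P_mono (h : Par a b γ) {φ ψ : ℝ → ℝ → ℝ}
    (hφ : ∀ u v, Valid a b γ u v → φ u v ≤ ψ u v) {u v : ℝ} (hv : Valid a b γ u v) :
    P a b γ φ u v ≤ P a b γ ψ u v := by
  have ha := h.ha.le
  have hb := h.b_pos.le
  unfold P
  split_ifs with h1 h2
  · exact mul_le_mul_of_nonneg_left (hφ _ _ (hv.left h h1)) ha
  · exact mul_le_mul_of_nonneg_left (hφ _ _ (hv.right h h2)) hb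
  · exact add_le_add
      (mul_le_mul_of_nonneg_left (hφ _ _ (hv.cut_left h (not_le.1 h2))) ha)
      (mul_le_mul_of_nonneg_left (hφ _ _ (hv.cut_right h (not_le.1 h1))) hb)

lemma P_iter_mono (h : Par a b γ) {φ ψ : ℝ → ℝ → ℝ}
    (hφ : ∀ u v, Valid a b γ u v → φ u v ≤ ψ u v) (n : ℕ) {u v : ℝ} (hv : Valid a b γ u v) :
    (P a b γ)^[n] φ u v ≤ (P a b γ)^[n] ψ u v := by
  induction n generalizing u v with
  | zero => exact hφ u v hv
  | succ n ih =>
    rw [Function.iterate_succ_apply', Function.iterate_succ_apply']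
    exact P_mono h (fun _ _ => ih) hv

/-- The operator `P` is linear and fixes the length `v - u`. -/
lemma P_affine (h : Par a b γ) (φ : ℝ → ℝ → ℝ) (s t u v : ℝ) :
    P a b γ (fun u v => s * φ u v + t * (v - u)) u v = s * P a b γ φ u v + t * (v - u) := by
  have ha := h.ha.ne'
  have hb := h.b_pos.ne'
  unfold P lo hi
  split_ifs <;> field_simp <;> ring

lemma P_iter_affine (h : Par a b γ) (φ : ℝ → ℝ → ℝ) (s t : ℝ) (n : ℕ) :
    (P a b γ)^[n] (fun u v => s * φ u v + t * (v - u)) =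
      fun u v => s * (P a b γ)^[n] φ u v + t * (v - u) := by
  induction n with
  | zero => rfl
  | succ n ih =>
    rw [Function.iterate_succ_apply', ih, Function.iterate_succ_apply']
    ext u v
    exact P_affine h _ s t u v

lemma F_nonneg (h : Par a b γ) (n : ℕ) {u v : ℝ} (hv : Valid a b γ u v) :
    0 ≤ F a b γ n u v := by
  have ha := h.ha.le
  have hb := h.b_pos.le
  induction n generalizing u v with
  | zero => simp [F_zero]
  | succ n ih =>
    rcases le_or_gt v γ with h1 | h1
    · rw [F_left n h1]
      exact mul_nonneg ha (ih (hv.left h h1))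
    rcases le_or_gt γ u with h2 | h2
    · rw [F_right n h2 hv.lt]
      exact mul_nonneg hb (ih (hv.right h h2))
    rw [F_cut n h2 h1]
    exact add_nonneg (mul_nonneg ha (ih (hv.cut_left h h2)))
      (mul_nonneg hb (ih (hv.cut_right h h1)))

lemma F_le_pow (h : Par a b γ) (n : ℕ) {u v : ℝ} (hv : Valid a b γ u v) :
    F a b γ n u v ≤ (1 + b) ^ n := by
  have ha := h.ha
  have ha1 := h.ha1
  have hb := h.b_pos
  induction n generalizing u v with
  | zero => simp [F_zero]
  | succ n ih =>
    have hp : 0 < (1 + b) ^ n := by positivity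
    rw [pow_succ]
    rcases le_or_gt v γ with h1 | h1
    · rw [F_left n h1]
      nlinarith [ih (hv.left h h1)]
    rcases le_or_gt γ u with h2 | h2
    · rw [F_right n h2 hv.lt]
      nlinarith [ih (hv.right h h2)]
    rw [F_cut n h2 h1]
    nlinarith [ih (hv.cut_left h h2), ih (hv.cut_right h h1)]

/-- Cutting an interval in two can only increase the sum of inverse slopes. -/
lemma F_subadd (h : Par a b γ) (n : ℕ) {u x v : ℝ} (hv : Valid a b γ u v) (hux : u < x)
    (hxv : x < v) : F a b γ n u v ≤ F a b γ n u x + F a b γ n x v := by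
  have ha := h.ha
  have hb := h.b_pos
  induction n generalizing u x v with
  | zero => simp [F_zero]
  | succ n ih =>
    rcases le_or_gt v γ with h1 | h1
    · rw [F_left n h1, F_left n h1, F_left n (by linarith), ← mul_add]
      exact mul_le_mul_of_nonneg_left
        (ih (hv.left h h1) (by gcongr) (by gcongr)) ha.le
    rcases le_or_gt γ u with h2 | h2
    · rw [F_right n h2 hv.lt, F_right n h2 hux, F_right n (by linarith) hxv, ← mul_add]
      exact mul_le_mul_of_nonneg_left
        (ih (hv.right h h2) (by gcongr) (by gcongr)) hb.le
    rw [F_cut n h2 h1]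
    rcases lt_trichotomy x γ with h3 | rfl | h3
    · rw [F_left n h3.le, F_cut n h3 h1, ← add_assoc, ← mul_add]
      exact add_le_add_left (mul_le_mul_of_nonneg_left
        (ih (hv.cut_left h h2) (by gcongr) (by unfold hi; gcongr)) ha.le) _
    · rw [F_left n le_rfl, F_right n le_rfl h1]
      exact le_rfl
    · rw [F_cut n h2 h3, F_right n h3.le hxv, add_assoc, ← mul_add]
      exact add_le_add_right (mul_le_mul_of_nonneg_left
        (ih (hv.cut_right h h1) (by unfold lo; gcongr) (by gcongr)) hb.le) _

/-! ### Uncut intervals and the growth estimate -/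

/-- `Uncut a b γ n u v`: none of the first `n` images of the interval `(u, v)` contains `γ`. -/
def Uncut (a b γ : ℝ) : ℕ → ℝ → ℝ → Prop
  | 0, _, _ => True
  | n + 1, u, v => (v ≤ γ ∧ Uncut a b γ n (u / a) (v / a)) ∨
      (γ ≤ u ∧ Uncut a b γ n ((u - 1) / b) ((v - 1) / b))

lemma Uncut.mono (h : Par a b γ) {n : ℕ} {u v u' v' : ℝ} (hU : Uncut a b γ n u v)
    (hu : u ≤ u') (hv : v' ≤ v) : Uncut a b γ n u' v' := by
  have ha := h.ha
  have hb := h.b_pos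
  induction n generalizing u v u' v' with
  | zero => trivial
  | succ n ih =>
    rcases hU with ⟨h1, h2⟩ | ⟨h1, h2⟩
    · exact Or.inl ⟨hv.trans h1, ih h2 (by gcongr) (by gcongr)⟩
    · exact Or.inr ⟨h1.trans hu, ih h2 (by gcongr) (by gcongr)⟩

lemma exists_uncut_right (h : Par a b γ) (n : ℕ) (x : ℝ) :
    ∃ δ > 0, Uncut a b γ n x (x + δ) := by
  have ha := h.ha
  have hb := h.b_pos
  induction n generalizing x with
  | zero => exact ⟨1, one_pos, trivial⟩
  | succ n ih =>
    rcases lt_or_ge x γ with hx | hx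
    · obtain ⟨δ, hδ, hU⟩ := ih (x / a)
      refine ⟨min (γ - x) (a * δ), lt_min (by linarith) (by positivity), Or.inl ⟨?_, ?_⟩⟩
      · linarith [min_le_left (γ - x) (a * δ)]
      · refine hU.mono h le_rfl ?_
        rw [div_le_iff₀ ha, add_mul, div_mul_cancel₀ _ ha.ne']
        linarith [min_le_right (γ - x) (a * δ)]
    · obtain ⟨δ, hδ, hU⟩ := ih ((x - 1) / b)
      refine ⟨b * δ, by positivity, Or.inr ⟨hx, hU.mono h le_rfl ?_⟩⟩
      rw [div_le_iff₀ hb, add_mul, div_mul_cancel₀ _ hb.ne']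
      linarith

lemma exists_uncut_left (h : Par a b γ) (n : ℕ) (x : ℝ) :
    ∃ δ > 0, Uncut a b γ n (x - δ) x := by
  have ha := h.ha
  have hb := h.b_pos
  induction n generalizing x with
  | zero => exact ⟨1, one_pos, trivial⟩
  | succ n ih =>
    rcases le_or_gt x γ with hx | hx
    · obtain ⟨δ, hδ, hU⟩ := ih (x / a)
      refine ⟨a * δ, by positivity, Or.inl ⟨hx, hU.mono h ?_ le_rfl⟩⟩
      rw [le_div_iff₀ ha, sub_mul, div_mul_cancel₀ _ ha.ne']
      linarith
    · obtain ⟨δ, hδ, hU⟩ := ih ((x - 1) / b)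
      refine ⟨min (x - γ) (b * δ), lt_min (by linarith) (by positivity), Or.inr ⟨?_, ?_⟩⟩
      · linarith [min_le_left (x - γ) (b * δ)]
      · refine hU.mono h ?_ le_rfl
        rw [le_div_iff₀ hb, sub_mul, div_mul_cancel₀ _ hb.ne']
        linarith [min_le_right (x - γ) (b * δ)]

/-- On an interval that is not cut the inverse slope decays exponentially. -/
lemma F_uncut (h : Par a b γ) (n : ℕ) {u v : ℝ} (hv : Valid a b γ u v)
    (hU : Uncut a b γ n u v) : F a b γ n u v ≤ rate a b γ ^ n * ((u + kap b) / kap b) := by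
  have hk := h.kap_pos
  have hr := h.rate_pos
  induction n generalizing u v with
  | zero =>
    rw [F_zero, pow_zero, one_mul, one_le_div hk]
    linarith [hv.lo_le, h.lo_pos]
  | succ n ih =>
    have hu : u ≤ hi a γ := hv.lt.le.trans hv.le_hi
    rcases hU with ⟨h1, h2⟩ | ⟨h1, h2⟩
    · rw [F_left n h1]
      calc a * F a b γ n (u / a) (v / a)
          ≤ a * (rate a b γ ^ n * ((u / a + kap b) / kap b)) :=
            mul_le_mul_of_nonneg_left (ih (hv.left h h1) h2) h.ha.le
        _ = rate a b γ ^ n * (a * (u / a + kap b) / kap b) := by ring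
        _ ≤ rate a b γ ^ n * (rate a b γ * (u + kap b) / kap b) :=
            mul_le_mul_of_nonneg_left (div_le_div_of_nonneg_right (h.rate_left hu) hk.le)
              (by positivity)
        _ = _ := by ring
    · rw [F_right n h1 hv.lt]
      calc b * F a b γ n ((u - 1) / b) ((v - 1) / b)
          ≤ b * (rate a b γ ^ n * (((u - 1) / b + kap b) / kap b)) :=
            mul_le_mul_of_nonneg_left (ih (hv.right h h1) h2) h.b_pos.le
        _ = rate a b γ ^ n * (b * ((u - 1) / b + kap b) / kap b) := by ring
        _ ≤ rate a b γ ^ n * (rate a b γ * (u + kap b) / kap b) :=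
            mul_le_mul_of_nonneg_left (div_le_div_of_nonneg_right (h.rate_right hu) hk.le)
              (by positivity)
        _ = _ := by ring

/-- For a fixed iterate, short intervals are cut at most once. -/
lemma exists_short (h : Par a b γ) (n : ℕ) : ∃ δ > 0, ∀ u v, Valid a b γ u v → v - u < δ →
    Uncut a b γ n u v ∨ ∃ x, u < x ∧ x < v ∧ Uncut a b γ n u x ∧ Uncut a b γ n x v := by
  choose r hr hUr using exists_uncut_right h n
  choose l hl hUl using exists_uncut_left h n
  obtain ⟨δ, hδ, hL⟩ := lebesgue_number_lemma_of_metric (s := Icc (lo b γ) (hi a γ))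
    (c := fun x => Ioo (x - l x) (x + r x)) isCompact_Icc (fun _ => isOpen_Ioo)
    (fun x _ => mem_iUnion.2 ⟨x, by linarith [hl x], by linarith [hr x]⟩)
  refine ⟨δ, hδ, fun u v hv huv => ?_⟩
  obtain ⟨x, hx⟩ := hL u ⟨hv.lo_le, hv.lt.le.trans hv.le_hi⟩
  have hu := hx (Metric.mem_ball_self hδ)
  have hv' : v ∈ Metric.ball u δ := by
    rw [Metric.mem_ball, Real.dist_eq, abs_of_pos (by linarith [hv.lt])]
    exact huv
  have hv' := hx hv'
  rcases le_or_gt v x with h1 | h1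
  · exact Or.inl ((hUl x).mono h hu.1.le h1)
  rcases le_or_gt x u with h2 | h2
  · exact Or.inl ((hUr x).mono h h2 hv'.2.le)
  · exact Or.inr ⟨x, h2, h1, (hUl x).mono h hu.1.le le_rfl, (hUr x).mono h le_rfl hv'.2.le⟩

/-- A Lasota–Yorke inequality for a suitable iterate. Short intervals are cut at most once, and
both pieces have small inverse slope; long intervals are absorbed by the length term. -/
lemma lasota_yorke (h : Par a b γ) : ∃ N : ℕ, 0 < N ∧ ∃ B : ℝ, 0 ≤ B ∧
    ∀ u v, Valid a b γ u v → F a b γ N u v ≤ 1 / 2 + B * (v - u) := by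
  have hk := h.kap_pos
  have hr := h.rate_pos
  have hb := h.b_pos
  set K := (hi a γ + kap b) / kap b with hK
  have hKpos : 0 < K := div_pos h.hi_kap_pos hk
  obtain ⟨N, hN⟩ := exists_pow_lt_of_lt_one (show 0 < 1 / (4 * (K + 1)) by positivity)
    h.rate_lt_one
  have hN1 : rate a b γ ^ (N + 1) * K ≤ 1 / 4 := by
    have h1 : rate a b γ ^ (N + 1) ≤ 1 / (4 * (K + 1)) :=
      (pow_le_pow_of_le_one hr.le h.rate_lt_one.le N.le_succ).trans hN.le
    calc rate a b γ ^ (N + 1) * K ≤ 1 / (4 * (K + 1)) * K := by gcongr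
      _ ≤ 1 / 4 := by
        rw [div_mul_eq_mul_div, div_le_div_iff₀ (by positivity) (by positivity)]
        linarith
  have hF : ∀ u v, Valid a b γ u v → Uncut a b γ (N + 1) u v → F a b γ (N + 1) u v ≤ 1 / 4 := by
    intro u v hv hU
    refine (F_uncut h _ hv hU).trans (le_trans ?_ hN1)
    have : u ≤ hi a γ := hv.lt.le.trans hv.le_hi
    rw [hK]
    gcongr
  obtain ⟨δ, hδ, hS⟩ := exists_short h (N + 1)
  refine ⟨N + 1, N.succ_pos, (1 + b) ^ (N + 1) / δ, by positivity, fun u v hv => ?_⟩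
  rcases lt_or_ge (v - u) δ with h1 | h1
  · have h2 : 0 ≤ (1 + b) ^ (N + 1) / δ * (v - u) :=
      mul_nonneg (by positivity) (by linarith [hv.lt])
    rcases hS u v hv h1 with hU | ⟨x, hux, hxv, hU1, hU2⟩
    · linarith [hF u v hv hU]
    · have := F_subadd h (N + 1) hv hux hxv
      have := hF u x ⟨hv.lo_le, hux, hxv.le.trans hv.le_hi⟩ hU1
      have := hF x v ⟨hv.lo_le.trans hux.le, hxv, hv.le_hi⟩ hU2
      linarith
  · have h2 : (1 + b) ^ (N + 1) ≤ (1 + b) ^ (N + 1) / δ * (v - u) := by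
      rw [div_mul_eq_mul_div, le_div_iff₀ hδ]
      gcongr
    linarith [F_le_pow h (N + 1) hv]

/-- The sums of inverse slopes are bounded uniformly over all iterates. -/
lemma exists_bound (h : Par a b γ) : ∃ C : ℝ, 0 < C ∧
    ∀ n, F a b γ n (lo b γ) (hi a γ) ≤ C := by
  obtain ⟨N, hN, B, hB, hLY⟩ := lasota_yorke h
  have hb := h.b_pos
  have key : ∀ n u v, Valid a b γ u v → F a b γ n u v ≤ (1 + b) ^ N + 2 * B * (v - u) := by
    intro n
    induction n using Nat.strong_induction_on with
    | _ n ih =>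
      intro u v hv
      have hBl : 0 ≤ B * (v - u) := mul_nonneg hB (by linarith [hv.lt])
      rcases lt_or_ge n N with hn | hn
      · have : (1 + b) ^ n ≤ (1 + b) ^ N := pow_le_pow_right₀ (by linarith) hn.le
        linarith [F_le_pow h n hv]
      · obtain ⟨m, rfl⟩ := Nat.exists_eq_add_of_le' hn
        have h1 : F a b γ (m + N) u v ≤ 1 / 2 * F a b γ m u v + B * (v - u) := by
          have h2 := P_iter_mono h (φ := F a b γ N)
            (ψ := fun u v => 1 / 2 * (1 : ℝ → ℝ → ℝ) u v + B * (v - u))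
            (fun u v hv => by simpa using hLY u v hv) m hv
          rw [P_iter_affine h] at h2
          rw [F, Function.iterate_add_apply]
          exact h2
        have h3 : 0 < (1 + b) ^ N := by positivity
        linarith [ih m (by omega) u v hv]
  have hp : 0 < (1 + b) ^ N := by positivity
  have hl : 0 ≤ 2 * B * (hi a γ - lo b γ) :=
    mul_nonneg (by positivity) (by linarith [h.valid.lt])
  exact ⟨_, by linarith, fun n => key n _ _ h.valid⟩

/-! ### Measure estimates along the orbits -/

lemma Tinv_left {x : ℝ} (hx : x < γ) : Tinv a b γ x = x / a := if_pos hx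

lemma Tinv_right {x : ℝ} (hx : γ ≤ x) : Tinv a b γ x = (x - 1) / b := if_neg (not_lt.2 hx)

lemma measurable_Tinv : Measurable (Tinv a b γ) :=
  Measurable.ite measurableSet_Iio (by fun_prop) (by fun_prop)

lemma volume_left (h : Par a b γ) (s : Set ℝ) :
    volume {x : ℝ | x / a ∈ s} = ENNReal.ofReal a * volume s := by
  have := Real.volume_preimage_mul_right (inv_ne_zero h.ha.ne') s
  rw [inv_inv, abs_of_pos h.ha] at this
  rw [← this]
  rfl

lemma volume_right (h : Par a b γ) (s : Set ℝ) :
    volume {x : ℝ | (x - 1) / b ∈ s} = ENNReal.ofReal b * volume s := by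
  have h1 := Real.volume_preimage_mul_right (inv_ne_zero h.b_pos.ne') s
  rw [inv_inv, abs_of_pos h.b_pos] at h1
  have h2 := measure_preimage_add_right volume (-1 : ℝ) ((fun x => x * b⁻¹) ⁻¹' s)
  rw [← h1, ← h2]
  simp only [preimage, mem_ofPred_eq, sub_eq_add_neg, div_eq_mul_inv]

lemma quasi_Tinv (h : Par a b γ) : Measure.QuasiMeasurePreserving (Tinv a b γ) volume volume := by
  refine ⟨measurable_Tinv, Measure.AbsolutelyContinuous.mk fun s hs h0 => ?_⟩
  rw [Measure.map_apply measurable_Tinv hs]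
  refine measure_mono_null (t := {x : ℝ | x / a ∈ s} ∪ {x : ℝ | (x - 1) / b ∈ s}) ?_ ?_
  · intro x hx
    rcases lt_or_ge x γ with h1 | h1
    · exact Or.inl (by simpa [Tinv_left h1] using hx)
    · exact Or.inr (by simpa [Tinv_right h1] using hx)
  · rw [measure_union_null_iff, volume_left h, volume_right h, h0]
    simp

lemma Tinv_mem (h : Par a b γ) {x : ℝ} (hx : x ∈ Icc (lo b γ) (hi a γ)) :
    Tinv a b γ x ∈ Icc (lo b γ) (hi a γ) := by
  have ha := h.ha
  have hb := h.b_pos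
  rcases lt_or_ge x γ with h1 | h1
  · rw [Tinv_left h1]
    refine ⟨?_, by unfold hi; gcongr⟩
    rw [le_div_iff₀ ha]
    nlinarith [hx.1, h.lo_pos, h.ha1]
  · rw [Tinv_right h1]
    exact ⟨by unfold lo; gcongr, h.right_le hx.2⟩

lemma iterate_mem (h : Par a b γ) (n : ℕ) {x : ℝ} (hx : x ∈ Icc (lo b γ) (hi a γ)) :
    (Tinv a b γ)^[n] x ∈ Icc (lo b γ) (hi a γ) :=
  (show MapsTo (Tinv a b γ) _ _ from fun _ => Tinv_mem h).iterate n hx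

/-- Induction principle for estimates of the measure of sets attached to intervals: if such a set
is covered, up to the cut point, by the preimages of the sets attached to the image intervals,
then its measure is controlled by the sum of inverse slopes. -/
lemma volume_le_F (h : Par a b γ) (E : ℕ → ℝ → ℝ → Set ℝ) (c : ℝ≥0∞)
    (h0 : ∀ u v, Valid a b γ u v → volume (E 0 u v) ≤ c)
    (hleft : ∀ n u v, Valid a b γ u v → v ≤ γ →
      E (n + 1) u v ⊆ {x | x / a ∈ E n (u / a) (v / a)})
    (hright : ∀ n u v, Valid a b γ u v → γ ≤ u →
      E (n + 1) u v ⊆ {x | (x - 1) / b ∈ E n ((u - 1) / b) ((v - 1) / b)})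
    (hcut : ∀ n u v, Valid a b γ u v → u < γ → γ < v →
      E (n + 1) u v ⊆ {x | x / a ∈ E n (u / a) (hi a γ)} ∪
        {x | (x - 1) / b ∈ E n (lo b γ) ((v - 1) / b)} ∪ {γ})
    (n : ℕ) {u v : ℝ} (hv : Valid a b γ u v) :
    volume (E n u v) ≤ ENNReal.ofReal (F a b γ n u v) * c := by
  have ha := h.ha.le
  have hb := h.b_pos.le
  induction n generalizing u v with
  | zero => simpa [F_zero] using h0 u v hv
  | succ n ih =>
    rcases le_or_gt v γ with h1 | h1
    · rw [F_left n h1, ENNReal.ofReal_mul ha, mul_assoc]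
      refine (measure_mono (hleft n u v hv h1)).trans ?_
      rw [volume_left h]
      gcongr
      exact ih (hv.left h h1)
    rcases le_or_gt γ u with h2 | h2
    · rw [F_right n h2 hv.lt, ENNReal.ofReal_mul hb, mul_assoc]
      refine (measure_mono (hright n u v hv h2)).trans ?_
      rw [volume_right h]
      gcongr
      exact ih (hv.right h h2)
    have hl := hv.cut_left h h2
    have hr := hv.cut_right h h1
    rw [F_cut n h2 h1, ENNReal.ofReal_add (mul_nonneg ha (F_nonneg h n hl))
      (mul_nonneg hb (F_nonneg h n hr)), ENNReal.ofReal_mul ha, ENNReal.ofReal_mul hb, add_mul,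
      mul_assoc, mul_assoc]
    refine (measure_mono (hcut n u v hv h2 h1)).trans ?_
    refine (measure_union_le _ _).trans ?_
    rw [Real.volume_singleton, add_zero]
    refine (measure_union_le _ _).trans ?_
    rw [volume_left h, volume_right h]
    gcongr
    · exact ih hl
    · exact ih hr

/-- The push-forwards of Lebesgue measure have uniformly bounded densities. -/
lemma volume_preimage_le (h : Par a b γ) {C : ℝ}
    (hC : ∀ n, F a b γ n (lo b γ) (hi a γ) ≤ C) (n : ℕ) (A : Set ℝ) :
    volume (Ioo (lo b γ) (hi a γ) ∩ (Tinv a b γ)^[n] ⁻¹' A) ≤ ENNReal.ofReal C * volume A := by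
  have ha := h.ha
  have hb := h.b_pos
  refine (volume_le_F h (fun n u v => Ioo u v ∩ (Tinv a b γ)^[n] ⁻¹' A) (volume A) ?_ ?_ ?_ ?_ n
    h.valid).trans ?_
  · exact fun u v _ => measure_mono inter_subset_right
  · rintro n u v - hv x ⟨hx, hxA⟩
    rw [mem_preimage, Function.iterate_succ_apply, Tinv_left (hx.2.trans_le hv)] at hxA
    exact ⟨⟨by have := hx.1; gcongr, by have := hx.2; gcongr⟩, hxA⟩
  · rintro n u v - hu x ⟨hx, hxA⟩
    rw [mem_preimage, Function.iterate_succ_apply, Tinv_right (hu.trans hx.1.le)] at hxA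
    exact ⟨⟨by have := hx.1; gcongr, by have := hx.2; gcongr⟩, hxA⟩
  · rintro n u v - hu hv x ⟨hx, hxA⟩
    rw [mem_preimage, Function.iterate_succ_apply] at hxA
    have hx1 := hx.1
    have hx2 := hx.2
    rcases lt_trichotomy x γ with h1 | h1 | h1
    · rw [Tinv_left h1] at hxA
      exact Or.inl (Or.inl ⟨⟨by gcongr, by unfold hi; gcongr⟩, hxA⟩)
    · exact Or.inr h1
    · rw [Tinv_right h1.le] at hxA
      exact Or.inl (Or.inr ⟨⟨by unfold lo; gcongr, by gcongr⟩, hxA⟩)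
  · gcongr
    exact hC n

/-- `Good a b γ ε n u v x`: on a symmetric neighbourhood of `x` inside `(u, v)` the `n`-th iterate
of `T` is an affine bijection onto the `ε`-neighbourhood of the image of `x`, with inverse slope
`w` exponentially small in `n`. -/
def Good (a b γ ε : ℝ) (n : ℕ) (u v x : ℝ) : Prop :=
  ∃ w > 0, w ≤ rate a b γ ^ n * ((x + kap b) / kap b) ∧ ∀ t, |t| < ε →
    x + w * t ∈ Ioo u v ∧ (Tinv a b γ)^[n] (x + w * t) = (Tinv a b γ)^[n] x + t

lemma good_left (h : Par a b γ) {ε : ℝ} (hε : 0 < ε) {n : ℕ} {u v x : ℝ} (hv : v ≤ γ)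
    (hx : x ≤ hi a γ) (hG : Good a b γ ε n (u / a) (v / a) (x / a)) :
    Good a b γ ε (n + 1) u v x := by
  have ha := h.ha
  have hk := h.kap_pos
  have hr := h.rate_pos
  obtain ⟨w, hw, hwr, hG⟩ := hG
  have key : ∀ t, |t| < ε → x + a * w * t ∈ Ioo u v ∧ (x + a * w * t) / a = x / a + w * t := by
    intro t ht
    have h1 : (x + a * w * t) / a = x / a + w * t := by field_simp
    refine ⟨?_, h1⟩
    have h2 := (hG t ht).1
    rw [← h1] at h2
    exact ⟨(div_lt_div_iff_of_pos_right ha).1 h2.1, (div_lt_div_iff_of_pos_right ha).1 h2.2⟩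
  have hxv : x < γ := by
    have := (key 0 (by simpa using hε)).1.2
    simp only [mul_zero, add_zero] at this
    linarith
  refine ⟨a * w, by positivity, ?_, fun t ht => ⟨(key t ht).1, ?_⟩⟩
  · calc a * w ≤ a * (rate a b γ ^ n * ((x / a + kap b) / kap b)) := by gcongr
      _ = rate a b γ ^ n * (a * (x / a + kap b) / kap b) := by ring
      _ ≤ rate a b γ ^ n * (rate a b γ * (x + kap b) / kap b) :=
        mul_le_mul_of_nonneg_left (div_le_div_of_nonneg_right (h.rate_left hx) hk.le)
          (by positivity)
      _ = _ := by ring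
  · rw [Function.iterate_succ_apply, Function.iterate_succ_apply, Tinv_left hxv,
      Tinv_left ((key t ht).1.2.trans_le hv), (key t ht).2, (hG t ht).2]

lemma good_right (h : Par a b γ) {ε : ℝ} (hε : 0 < ε) {n : ℕ} {u v x : ℝ} (hu : γ ≤ u)
    (hx : x ≤ hi a γ) (hG : Good a b γ ε n ((u - 1) / b) ((v - 1) / b) ((x - 1) / b)) :
    Good a b γ ε (n + 1) u v x := by
  have hb := h.b_pos
  have hk := h.kap_pos
  have hr := h.rate_pos
  obtain ⟨w, hw, hwr, hG⟩ := hG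
  have key : ∀ t, |t| < ε →
      x + b * w * t ∈ Ioo u v ∧ (x + b * w * t - 1) / b = (x - 1) / b + w * t := by
    intro t ht
    have h1 : (x + b * w * t - 1) / b = (x - 1) / b + w * t := by
      field_simp
      ring
    refine ⟨?_, h1⟩
    have h2 := (hG t ht).1
    rw [← h1] at h2
    have h3 := (div_lt_div_iff_of_pos_right hb).1 h2.1
    have h4 := (div_lt_div_iff_of_pos_right hb).1 h2.2
    exact ⟨by linarith, by linarith⟩
  have hxv : γ ≤ x := by
    have := (key 0 (by simpa using hε)).1.1
    simp only [mul_zero, add_zero] at this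
    linarith
  refine ⟨b * w, by positivity, ?_, fun t ht => ⟨(key t ht).1, ?_⟩⟩
  · calc b * w ≤ b * (rate a b γ ^ n * (((x - 1) / b + kap b) / kap b)) := by gcongr
      _ = rate a b γ ^ n * (b * ((x - 1) / b + kap b) / kap b) := by ring
      _ ≤ rate a b γ ^ n * (rate a b γ * (x + kap b) / kap b) :=
        mul_le_mul_of_nonneg_left (div_le_div_of_nonneg_right (h.rate_right hx) hk.le)
          (by positivity)
      _ = _ := by ring
  · rw [Function.iterate_succ_apply, Function.iterate_succ_apply, Tinv_right hxv,
      Tinv_right (hu.trans (key t ht).1.1.le), (key t ht).2, (hG t ht).2]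

lemma Good.mono {ε : ℝ} {n : ℕ} {u v u' v' x : ℝ} (hG : Good a b γ ε n u v x) (hu : u' ≤ u)
    (hv : v ≤ v') : Good a b γ ε n u' v' x := by
  obtain ⟨w, hw, hwr, hG⟩ := hG
  exact ⟨w, hw, hwr, fun t ht => ⟨Ioo_subset_Ioo hu hv (hG t ht).1, (hG t ht).2⟩⟩

/-- The points at which the `n`-th iterate does not reach the scale `ε` have measure `O(ε)`,
uniformly in `n`. -/
lemma volume_not_good_le (h : Par a b γ) {C : ℝ}
    (hC : ∀ n, F a b γ n (lo b γ) (hi a γ) ≤ C) {ε : ℝ} (hε : 0 < ε) (n : ℕ) :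
    volume {x ∈ Ioo (lo b γ) (hi a γ) | ¬ Good a b γ ε n (lo b γ) (hi a γ) x} ≤
      ENNReal.ofReal C * ENNReal.ofReal (2 * ε) := by
  have ha := h.ha
  have hb := h.b_pos
  have hk := h.kap_pos
  refine (volume_le_F h (fun n u v => {x ∈ Ioo u v | ¬ Good a b γ ε n u v x})
    (ENNReal.ofReal (2 * ε)) ?_ ?_ ?_ ?_ n h.valid).trans ?_
  · intro u v hv
    have hsub : {x ∈ Ioo u v | ¬ Good a b γ ε 0 u v x} ⊆ Ioo u (u + ε) ∪ Ioo (v - ε) v := by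
      rintro x ⟨hx, hG⟩
      by_contra hcon
      simp only [mem_union, mem_Ioo, not_or, not_and, not_lt] at hcon
      have h1 := hcon.1 hx.1
      have h2 : x + ε ≤ v := by
        by_contra h3
        exact absurd (hcon.2 (by linarith)) (not_le.2 hx.2)
      refine hG ⟨1, one_pos, ?_, fun t ht => ?_⟩
      · rw [pow_zero, one_mul, one_le_div hk]
        linarith [hv.lo_le, h.lo_pos, hx.1]
      · rw [abs_lt] at ht
        exact ⟨⟨by linarith [ht.1], by linarith [ht.2]⟩, by simp⟩
    refine (measure_mono hsub).trans ((measure_union_le _ _).trans ?_)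
    rw [Real.volume_Ioo, Real.volume_Ioo, ← ENNReal.ofReal_add (by linarith) (by linarith)]
    exact ENNReal.ofReal_le_ofReal (by linarith)
  · rintro n u v hV hv x ⟨hx, hG⟩
    have hx1 := hx.1
    have hx2 := hx.2
    exact ⟨⟨by gcongr, by gcongr⟩, fun hG' => hG (good_left h hε hv (hx2.le.trans hV.le_hi) hG')⟩
  · rintro n u v hV hu x ⟨hx, hG⟩
    have hx1 := hx.1
    have hx2 := hx.2
    exact ⟨⟨by gcongr, by gcongr⟩, fun hG' => hG (good_right h hε hu (hx2.le.trans hV.le_hi) hG')⟩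
  · rintro n u v hV hu hv x ⟨hx, hG⟩
    have hx1 := hx.1
    have hx2 := hx.2
    rcases lt_trichotomy x γ with h1 | h1 | h1
    · exact Or.inl (Or.inl ⟨⟨by gcongr, by unfold hi; gcongr⟩, fun hG' =>
        hG ((good_left h hε le_rfl (hx2.le.trans hV.le_hi) hG').mono le_rfl hv.le)⟩)
    · exact Or.inr h1
    · exact Or.inl (Or.inr ⟨⟨by unfold lo; gcongr, by gcongr⟩, fun hG' =>
        hG ((good_right h hε le_rfl (hx2.le.trans hV.le_hi) hG').mono hu.le le_rfl)⟩)
  · gcongr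
    exact hC n

/-! ### Orbits of intervals -/

/-- The orbit of the interval `(u, v)`, meaningful up to the first time it contains `γ`. -/
noncomputable def orb (a b γ u v : ℝ) : ℕ → ℝ × ℝ
  | 0 => (u, v)
  | n + 1 =>
    let I := orb a b γ u v n
    if I.2 ≤ γ then (I.1 / a, I.2 / a) else ((I.1 - 1) / b, (I.2 - 1) / b)

lemma orb_left {u v : ℝ} {n : ℕ} (hn : (orb a b γ u v n).2 ≤ γ) :
    orb a b γ u v (n + 1) = ((orb a b γ u v n).1 / a, (orb a b γ u v n).2 / a) := by
  rw [orb]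
  exact if_pos hn

lemma orb_right {u v : ℝ} {n : ℕ} (hn : γ < (orb a b γ u v n).2) :
    orb a b γ u v (n + 1) = (((orb a b γ u v n).1 - 1) / b, ((orb a b γ u v n).2 - 1) / b) := by
  rw [orb]
  exact if_neg (not_le.2 hn)

/-- Every interval has an image that contains `γ` in its interior, since until then its length in
the metric `dx / (x + κ)` grows exponentially. -/
lemma exists_hit (h : Par a b γ) {u v : ℝ} (hv : Valid a b γ u v) : ∃ n,
    (∀ i < n, (orb a b γ u v i).2 ≤ γ ∨ γ ≤ (orb a b γ u v i).1) ∧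
    (∀ i ≤ n, Valid a b γ (orb a b γ u v i).1 (orb a b γ u v i).2) ∧
    (orb a b γ u v n).1 < γ ∧ γ < (orb a b γ u v n).2 := by
  classical
  have hk := h.kap_pos
  have hr := h.rate_pos
  have step : ∀ i, Valid a b γ (orb a b γ u v i).1 (orb a b γ u v i).2 →
      ((orb a b γ u v i).2 ≤ γ ∨ γ ≤ (orb a b γ u v i).1) →
      Valid a b γ (orb a b γ u v (i + 1)).1 (orb a b γ u v (i + 1)).2 := by
    intro i hV hi
    rcases le_or_gt (orb a b γ u v i).2 γ with h1 | h1
    · rw [orb_left h1]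
      exact hV.left h h1
    · rw [orb_right h1]
      exact hV.right h (hi.resolve_left (not_le.2 h1))
  have hex : ∃ n, ¬ ((orb a b γ u v n).2 ≤ γ ∨ γ ≤ (orb a b γ u v n).1) := by
    by_contra! hcon
    have hV : ∀ i, Valid a b γ (orb a b γ u v i).1 (orb a b γ u v i).2 := by
      intro i
      induction i with
      | zero => exact hv
      | succ i ih => exact step i ih (hcon i)
    have hgrow : ∀ i, (v - u) * ((orb a b γ u v i).1 + kap b) ≤
        rate a b γ ^ i * (u + kap b) * ((orb a b γ u v i).2 - (orb a b γ u v i).1) := by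
      intro i
      induction i with
      | zero =>
        simp only [orb, pow_zero, one_mul]
        linarith
      | succ i ih =>
        set x := (orb a b γ u v i).1
        set y := (orb a b γ u v i).2
        have hx : x ≤ hi a γ := (hV i).lt.le.trans (hV i).le_hi
        have hl : 0 ≤ v - u := by linarith [hv.lt]
        rcases le_or_gt (orb a b γ u v i).2 γ with h1 | h1
        · rw [orb_left h1]
          refine le_of_mul_le_mul_left ?_ h.ha
          calc a * ((v - u) * (x / a + kap b)) = (v - u) * (a * (x / a + kap b)) := by ring
            _ ≤ (v - u) * (rate a b γ * (x + kap b)) := by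
              gcongr (v - u) * ?_
              exact h.rate_left hx
            _ = rate a b γ * ((v - u) * (x + kap b)) := by ring
            _ ≤ rate a b γ * (rate a b γ ^ i * (u + kap b) * (y - x)) := by gcongr
            _ = _ := by
              have := h.ha.ne'
              field_simp
              ring
        · rw [orb_right h1]
          refine le_of_mul_le_mul_left ?_ h.b_pos
          calc b * ((v - u) * ((x - 1) / b + kap b))
              = (v - u) * (b * ((x - 1) / b + kap b)) := by ring
            _ ≤ (v - u) * (rate a b γ * (x + kap b)) := by
              gcongr (v - u) * ?_
              exact h.rate_right hx
            _ = rate a b γ * ((v - u) * (x + kap b)) := by ring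
            _ ≤ rate a b γ * (rate a b γ ^ i * (u + kap b) * (y - x)) := by gcongr
            _ = _ := by
              have := h.b_pos.ne'
              field_simp
              ring
    have hup : 0 < u + kap b := by linarith [hv.lo_le, h.lo_pos]
    have hhi : 0 < hi a γ := by linarith [h.lt_hi, h.hγ]
    have hvu : 0 < v - u := by linarith [hv.lt]
    obtain ⟨n, hn⟩ := exists_pow_lt_of_lt_one
      (show 0 < (v - u) * kap b / ((u + kap b) * hi a γ) by positivity) h.rate_lt_one
    rw [lt_div_iff₀ (by positivity)] at hn
    have h1 := hgrow n
    have h2 : (v - u) * kap b ≤ (v - u) * ((orb a b γ u v n).1 + kap b) := by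
      gcongr
      linarith [(hV n).lo_le, h.lo_pos]
    have h3 : rate a b γ ^ n * (u + kap b) * ((orb a b γ u v n).2 - (orb a b γ u v n).1) ≤
        rate a b γ ^ n * (u + kap b) * hi a γ := by
      gcongr
      linarith [(hV n).lo_le, h.lo_pos, (hV n).le_hi]
    nlinarith
  have hlt : ∀ i < Nat.find hex, (orb a b γ u v i).2 ≤ γ ∨ γ ≤ (orb a b γ u v i).1 :=
    fun i hi => not_not.1 (Nat.find_min hex hi)
  have hfind := Nat.find_spec hex
  rw [not_or, not_le, not_le] at hfind
  refine ⟨Nat.find hex, hlt, fun i hi => ?_, hfind.2, hfind.1⟩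
  induction i with
  | zero => exact hv
  | succ i ih => exact step i (ih (by omega)) (hlt i (by omega))

/-! ### Forward invariant sets contain a neighbourhood of `γ` -/

lemma null_left (h : Par a b γ) {A : Set ℝ} (hinv : ∀ᵐ x, x ∈ A → Tinv a b γ x ∈ A) {u v : ℝ}
    (hv : v ≤ γ) (h0 : volume (Ioo u v \ A) = 0) : volume (Ioo (u / a) (v / a) \ A) = 0 := by
  have ha := h.ha
  have h1 : volume {x : ℝ | x / a ∈ Ioo (u / a) (v / a) \ A} = 0 := by
    refine measure_mono_null ?_ (measure_union_null h0 (ae_iff.1 hinv))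
    rintro x ⟨hx, hxA⟩
    have hx1 := (div_lt_div_iff_of_pos_right ha).1 hx.1
    have hx2 := (div_lt_div_iff_of_pos_right ha).1 hx.2
    by_cases hA : x ∈ A
    · refine Or.inr fun hcon => hxA ?_
      rw [← Tinv_left (b := b) (hx2.trans_le hv)]
      exact hcon hA
    · exact Or.inl ⟨⟨hx1, hx2⟩, hA⟩
  rw [volume_left h] at h1
  exact (mul_eq_zero.1 h1).resolve_left (by simpa using ha)

lemma null_right (h : Par a b γ) {A : Set ℝ} (hinv : ∀ᵐ x, x ∈ A → Tinv a b γ x ∈ A) {u v : ℝ}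
    (hu : γ ≤ u) (h0 : volume (Ioo u v \ A) = 0) :
    volume (Ioo ((u - 1) / b) ((v - 1) / b) \ A) = 0 := by
  have hb := h.b_pos
  have h1 : volume {x : ℝ | (x - 1) / b ∈ Ioo ((u - 1) / b) ((v - 1) / b) \ A} = 0 := by
    refine measure_mono_null ?_ (measure_union_null h0 (ae_iff.1 hinv))
    rintro x ⟨hx, hxA⟩
    have hx1 := (div_lt_div_iff_of_pos_right hb).1 hx.1
    have hx2 := (div_lt_div_iff_of_pos_right hb).1 hx.2
    by_cases hA : x ∈ A
    · refine Or.inr fun hcon => hxA ?_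
      rw [← Tinv_right (a := a) (by linarith : γ ≤ x)]
      exact hcon hA
    · exact Or.inl ⟨⟨by linarith, by linarith⟩, hA⟩
  rw [volume_right h] at h1
  exact (mul_eq_zero.1 h1).resolve_left (by simpa using hb)

lemma ae_iterate_mem (h : Par a b γ) {A : Set ℝ} (hinv : ∀ᵐ x, x ∈ A → Tinv a b γ x ∈ A)
    (n : ℕ) : ∀ᵐ x, x ∈ A → (Tinv a b γ)^[n] x ∈ A := by
  induction n with
  | zero => exact Eventually.of_forall fun _ hx => hx
  | succ n ih =>
    have := ((quasi_Tinv h).iterate n).ae hinv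
    filter_upwards [ih, this] with x h1 h2 hx
    rw [Function.iterate_succ_apply']
    exact h2 (h1 hx)

lemma volume_affine {w : ℝ} (hw : 0 < w) (c : ℝ) (s : Set ℝ) :
    volume {y : ℝ | c + w * y ∈ s} = ENNReal.ofReal w⁻¹ * volume s := by
  have h1 := Real.volume_preimage_mul_left hw.ne' ((fun y => c + y) ⁻¹' s)
  rw [abs_of_pos (inv_pos.2 hw), measure_preimage_add] at h1
  exact h1

/-- Blow-up at a density point: a forward invariant set of positive measure fills an `ε`-interval
up to an arbitrarily small proportion. The density point is chosen among the points at which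
infinitely many iterates reach the scale `ε`; distortion plays no role, `T` being piecewise
affine. -/
lemma exists_almost_full (h : Par a b γ) {A : Set ℝ} (hA : MeasurableSet A)
    (hpos : volume (A ∩ Ioo (lo b γ) (hi a γ)) ≠ 0)
    (hinv : ∀ᵐ x, x ∈ A → Tinv a b γ x ∈ A) : ∃ ε > 0, ∀ τ : ℝ≥0∞, 0 < τ →
      ∃ z ∈ Icc (lo b γ) (hi a γ),
        volume (Ioo (z - ε) (z + ε) \ A) ≤ τ * ENNReal.ofReal (2 * ε) := by
  obtain ⟨C, hC0, hC⟩ := exists_bound h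
  have hk := h.kap_pos
  have hr := h.rate_pos
  have hfin : volume (A ∩ Ioo (lo b γ) (hi a γ)) ≠ ∞ :=
    ((measure_mono inter_subset_right).trans_lt measure_Ioo_lt_top).ne
  have hm := ENNReal.toReal_pos hpos hfin
  set m := (volume (A ∩ Ioo (lo b γ) (hi a γ))).toReal
  -- with this scale the exceptional points take up at most half of the measure of `A`
  set ε := m / (4 * C) with hε_def
  have hε : 0 < ε := by positivity
  have hsmall : ENNReal.ofReal C * ENNReal.ofReal (2 * ε) <
      volume (A ∩ Ioo (lo b γ) (hi a γ)) := by
    rw [← ENNReal.ofReal_mul hC0.le, ← ENNReal.ofReal_toReal hfin]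
    refine (ENNReal.ofReal_lt_ofReal_iff hm).2 ?_
    have : C * (2 * ε) = m / 2 := by
      rw [hε_def]
      field_simp
      ring
    change C * (2 * ε) < m
    linarith
  -- the points at which only finitely many iterates reach the scale `ε`
  set D : ℕ → Set ℝ := fun k =>
    {x ∈ Ioo (lo b γ) (hi a γ) | ∀ n ≥ k, ¬ Good a b γ ε n (lo b γ) (hi a γ) x} with hD
  have hDmono : Monotone D := fun i j hij x hx => ⟨hx.1, fun n hn => hx.2 n (hij.trans hn)⟩
  have hDle : volume (⋃ k, D k) ≤ ENNReal.ofReal C * ENNReal.ofReal (2 * ε) := by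
    rw [hDmono.measure_iUnion]
    refine iSup_le fun k => le_trans (measure_mono ?_) (volume_not_good_le h hC hε k)
    exact fun x hx => ⟨hx.1, hx.2 k le_rfl⟩
  have hne : volume ((A ∩ Ioo (lo b γ) (hi a γ)) \ ⋃ k, D k) ≠ 0 := by
    intro h0
    refine absurd hsmall (not_lt.2 (le_trans ?_ hDle))
    calc volume (A ∩ Ioo (lo b γ) (hi a γ))
        ≤ volume ((A ∩ Ioo (lo b γ) (hi a γ)) \ (⋃ k, D k) ∪ ⋃ k, D k) :=
          measure_mono (by rw [sdiff_union_self]; exact subset_union_left)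
      _ ≤ _ := (measure_union_le _ _).trans (by rw [h0, zero_add])
  obtain ⟨x, ⟨⟨hxA, hxI⟩, hxD⟩, hdens⟩ := ((frequently_ae_mem_iff.2 hne).and_eventually
    (Besicovitch.ae_tendsto_measure_inter_div_of_measurableSet volume hA.compl)).exists
  have hind : (Aᶜ).indicator (1 : ℝ → ℝ≥0∞) x = 0 := indicator_of_notMem (not_not.2 hxA) _
  rw [hind] at hdens
  refine ⟨ε, hε, fun τ hτ => ?_⟩
  obtain ⟨δ, hδ, hδτ⟩ : ∃ δ > 0, ∀ r, 0 < r → r < δ →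
      volume (Aᶜ ∩ Metric.closedBall x r) / volume (Metric.closedBall x r) < τ := by
    have := hdens.eventually (gt_mem_nhds hτ)
    obtain ⟨δ, hδ, hs⟩ := mem_nhdsGT_iff_exists_Ioo_subset.1 this
    exact ⟨δ, hδ, fun r h1 h2 => hs ⟨h1, h2⟩⟩
  have hKpos : 0 < (x + kap b) / kap b := div_pos (by linarith [hxI.1, h.lo_pos]) hk
  obtain ⟨k, hk⟩ := exists_pow_lt_of_lt_one
    (show 0 < δ / (((x + kap b) / kap b) * ε) by positivity) h.rate_lt_one
  rw [lt_div_iff₀ (by positivity)] at hk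
  obtain ⟨n, hn, hG⟩ : ∃ n ≥ k, Good a b γ ε n (lo b γ) (hi a γ) x := by
    by_contra! hcon
    exact hxD (mem_iUnion.2 ⟨k, hxI, hcon⟩)
  obtain ⟨w, hw, hwr, hG⟩ := hG
  set z := (Tinv a b γ)^[n] x
  refine ⟨z, iterate_mem h n ⟨hxI.1.le, hxI.2.le⟩, ?_⟩
  have hwδ : w * ε < δ := by
    refine lt_of_le_of_lt ?_ hk
    have : rate a b γ ^ n ≤ rate a b γ ^ k := pow_le_pow_of_le_one hr.le h.rate_lt_one.le hn
    calc w * ε ≤ rate a b γ ^ n * ((x + kap b) / kap b) * ε := by gcongr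
      _ ≤ rate a b γ ^ k * ((x + kap b) / kap b) * ε := by gcongr
      _ = _ := by ring
  have hwε : 0 < w * ε := by positivity
  have hratio := (hδτ _ hwε hwδ).le
  rw [Real.volume_closedBall, ENNReal.div_le_iff (by simpa using hwε) ENNReal.ofReal_ne_top]
    at hratio
  set N := {y : ℝ | ¬ (y ∈ A → (Tinv a b γ)^[n] y ∈ A)}
  have hN : volume N = 0 := ae_iff.1 (ae_iterate_mem h hinv n)
  have hsub : Ioo (z - ε) (z + ε) \ A ⊆
      {y | x - w * z + w * y ∈ (Aᶜ ∩ Metric.closedBall x (w * ε)) ∪ N} := by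
    rintro y ⟨hy, hyA⟩
    have ht : |y - z| < ε := abs_lt.2 ⟨by linarith [hy.1], by linarith [hy.2]⟩
    have heq : x - w * z + w * y = x + w * (y - z) := by ring
    have himg := (hG _ ht).2
    rw [add_sub_cancel] at himg
    rw [mem_ofPred_eq, heq]
    by_cases hp : x + w * (y - z) ∈ A
    · refine Or.inr fun hcon => hyA ?_
      rw [← himg]
      exact hcon hp
    · refine Or.inl ⟨hp, ?_⟩
      rw [Metric.mem_closedBall, Real.dist_eq, add_sub_cancel_left, abs_mul, abs_of_pos hw]
      gcongr
  calc volume (Ioo (z - ε) (z + ε) \ A)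
      ≤ ENNReal.ofReal w⁻¹ * volume ((Aᶜ ∩ Metric.closedBall x (w * ε)) ∪ N) := by
        rw [← volume_affine hw]
        exact measure_mono hsub
    _ ≤ ENNReal.ofReal w⁻¹ * (τ * ENNReal.ofReal (2 * (w * ε))) := by
        gcongr
        refine (measure_union_le _ _).trans ?_
        rw [hN, add_zero]
        exact hratio
    _ = τ * (ENNReal.ofReal w⁻¹ * ENNReal.ofReal (2 * (w * ε))) := by ring
    _ = τ * ENNReal.ofReal (2 * ε) := by
        rw [← ENNReal.ofReal_mul (by positivity)]
        congr 2
        field_simp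

/-- The `ε`-intervals almost filled by `A` accumulate, by compactness of `I`, at an interval whose
concentric half is filled by `A`. It is cut down to `I`. -/
lemma exists_full_interval (h : Par a b γ) {A : Set ℝ} (hA : MeasurableSet A)
    (hpos : volume (A ∩ Ioo (lo b γ) (hi a γ)) ≠ 0)
    (hinv : ∀ᵐ x, x ∈ A → Tinv a b γ x ∈ A) :
    ∃ u v, Valid a b γ u v ∧ volume (Ioo u v \ A) = 0 := by
  obtain ⟨ε, hε, hfull⟩ := exists_almost_full h hA hpos hinv
  choose y hyI hy using fun k : ℕ => hfull ((k : ℝ≥0∞)⁻¹) (by simp)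
  obtain ⟨z, hz, φ, hφ, hlim⟩ := isCompact_Icc.tendsto_subseq hyI
  refine ⟨max (lo b γ) (z - ε / 2), min (hi a γ) (z + ε / 2),
    ⟨le_max_left _ _, ?_, min_le_left _ _⟩, ?_⟩
  · have := h.valid.lt
    rw [max_lt_iff, lt_min_iff, lt_min_iff]
    exact ⟨⟨this, by linarith [hz.1]⟩, by linarith [hz.2], by linarith⟩
  · have hto : Tendsto (fun k => ((φ k : ℕ) : ℝ≥0∞)⁻¹ * ENNReal.ofReal (2 * ε)) atTop (𝓝 0) := by
      have h1 := ENNReal.tendsto_inv_nat_nhds_zero.comp hφ.tendsto_atTop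
      have h2 := ENNReal.Tendsto.mul_const (b := ENNReal.ofReal (2 * ε)) h1
        (Or.inr ENNReal.ofReal_ne_top)
      rwa [zero_mul] at h2
    refine le_antisymm (ge_of_tendsto hto ?_) zero_le
    filter_upwards [hlim.eventually (Metric.ball_mem_nhds z (half_pos hε))] with k hk
    refine (measure_mono ?_).trans (hy (φ k))
    rw [Real.dist_eq, abs_lt] at hk
    simp only [Function.comp_apply] at hk
    refine sdiff_subset_sdiff_left (Ioo_subset_Ioo ?_ ?_)
    · exact le_trans (by linarith [hk.2]) (le_max_right _ _)
    · exact le_trans (min_le_right _ _) (by linarith [hk.1])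

/-- A forward invariant set of positive measure has full measure in a neighbourhood of `γ`: it
contains an interval, and the images of this interval grow until they contain `γ`. -/
lemma exists_full_nhds (h : Par a b γ) {A : Set ℝ} (hA : MeasurableSet A)
    (hpos : volume (A ∩ Ioo (lo b γ) (hi a γ)) ≠ 0)
    (hinv : ∀ᵐ x, x ∈ A → Tinv a b γ x ∈ A) :
    ∃ p q, p < γ ∧ γ < q ∧ volume (Ioo p q \ A) = 0 := by
  obtain ⟨u, v, hv, h0⟩ := exists_full_interval h hA hpos hinv
  obtain ⟨n, hn, -, hp, hq⟩ := exists_hit h hv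
  refine ⟨_, _, hp, hq, ?_⟩
  have key : ∀ i ≤ n, volume (Ioo (orb a b γ u v i).1 (orb a b γ u v i).2 \ A) = 0 := by
    intro i hi
    induction i with
    | zero => exact h0
    | succ i ih =>
      rcases le_or_gt (orb a b γ u v i).2 γ with h1 | h1
      · rw [orb_left h1]
        exact null_left h hinv h1 (ih (by omega))
      · rw [orb_right h1]
        exact null_right h hinv ((hn i (by omega)).resolve_left (not_le.2 h1)) (ih (by omega))
  exact key n le_rfl

/-! ### Existence of an absolutely continuous invariant measure -/

/-- The average of the first `n + 1` push-forwards of Lebesgue measure on `I`. -/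
noncomputable def avg (a b γ : ℝ) (n : ℕ) : Measure ℝ :=
  ((n + 1 : ℕ) : ℝ≥0∞)⁻¹ • ∑ k ∈ Finset.range (n + 1),
    (volume.restrict (Ioo (lo b γ) (hi a γ))).map (Tinv a b γ)^[k]

/-- The limit of the averages along a non-principal ultrafilter. -/
noncomputable def limVal (a b γ : ℝ) (A : Set ℝ) : ℝ≥0∞ :=
  ((hyperfilter ℕ).map fun n => avg a b γ n A).lim

lemma tendsto_limVal (A : Set ℝ) :
    Tendsto (fun n => avg a b γ n A) (hyperfilter ℕ) (𝓝 (limVal a b γ A)) :=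
  ((hyperfilter ℕ).map fun n => avg a b γ n A).le_nhds_lim

lemma map_iterate_apply (k : ℕ) {A : Set ℝ} (hA : MeasurableSet A) :
    (volume.restrict (Ioo (lo b γ) (hi a γ))).map (Tinv a b γ)^[k] A =
      volume (Ioo (lo b γ) (hi a γ) ∩ (Tinv a b γ)^[k] ⁻¹' A) := by
  have hm := (measurable_Tinv (a := a) (b := b) (γ := γ)).iterate k
  rw [Measure.map_apply hm hA, Measure.restrict_apply (hm hA), inter_comm]

lemma avg_apply (n : ℕ) {A : Set ℝ} (hA : MeasurableSet A) :
    avg a b γ n A = ((n + 1 : ℕ) : ℝ≥0∞)⁻¹ * ∑ k ∈ Finset.range (n + 1),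
      volume (Ioo (lo b γ) (hi a γ) ∩ (Tinv a b γ)^[k] ⁻¹' A) := by
  rw [avg, Measure.smul_apply, Measure.finsetSum_apply, smul_eq_mul]
  congr 1
  exact Finset.sum_congr rfl fun k _ => map_iterate_apply k hA

lemma inv_mul_natCast_succ (n : ℕ) : ((n + 1 : ℕ) : ℝ≥0∞)⁻¹ * ((n + 1 : ℕ) : ℝ≥0∞) = 1 :=
  ENNReal.inv_mul_cancel (by simp) (ENNReal.natCast_ne_top _)

lemma avg_univ (n : ℕ) : avg a b γ n univ = volume (Ioo (lo b γ) (hi a γ)) := by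
  rw [avg_apply n MeasurableSet.univ]
  simp only [preimage_univ, inter_univ, Finset.sum_const, Finset.card_range, nsmul_eq_mul]
  rw [← mul_assoc, inv_mul_natCast_succ, one_mul]

lemma avg_le (h : Par a b γ) {C : ℝ} (hC : ∀ n, F a b γ n (lo b γ) (hi a γ) ≤ C) (n : ℕ)
    {A : Set ℝ} (hA : MeasurableSet A) :
    avg a b γ n A ≤ ENNReal.ofReal C * volume (A ∩ Icc (lo b γ) (hi a γ)) := by
  rw [avg_apply n hA]
  calc _ ≤ ((n + 1 : ℕ) : ℝ≥0∞)⁻¹ * ∑ k ∈ Finset.range (n + 1),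
        (ENNReal.ofReal C * volume (A ∩ Icc (lo b γ) (hi a γ))) := by
        gcongr with k
        refine (measure_mono ?_).trans (volume_preimage_le h hC k _)
        exact fun x hx => ⟨hx.1, hx.2, iterate_mem h k ⟨hx.1.1.le, hx.1.2.le⟩⟩
    _ = _ := by
        rw [Finset.sum_const, Finset.card_range, nsmul_eq_mul, ← mul_assoc, inv_mul_natCast_succ, one_mul]

/-- The averages are invariant up to two boundary terms. -/
lemma avg_preimage (n : ℕ) {A : Set ℝ} (hA : MeasurableSet A) :
    avg a b γ n (Tinv a b γ ⁻¹' A) +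
        ((n + 1 : ℕ) : ℝ≥0∞)⁻¹ * volume (Ioo (lo b γ) (hi a γ) ∩ A) =
      avg a b γ n A + ((n + 1 : ℕ) : ℝ≥0∞)⁻¹ *
        volume (Ioo (lo b γ) (hi a γ) ∩ (Tinv a b γ)^[n + 1] ⁻¹' A) := by
  rw [avg_apply n hA, avg_apply n (measurable_Tinv hA), ← mul_add, ← mul_add,
    ← Finset.sum_range_succ, Finset.sum_range_succ' _ (n + 1)]
  simp only [Function.iterate_succ', preimage_comp, Function.iterate_zero, preimage_id]

lemma limVal_preimage {A : Set ℝ} (hA : MeasurableSet A) :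
    limVal a b γ (Tinv a b γ ⁻¹' A) = limVal a b γ A := by
  -- the boundary terms tend to `0`
  have hz : ∀ B : ℕ → Set ℝ, Tendsto (fun n : ℕ => ((n + 1 : ℕ) : ℝ≥0∞)⁻¹ *
      volume (Ioo (lo b γ) (hi a γ) ∩ B n)) (hyperfilter ℕ) (𝓝 0) := by
    intro B
    refine Tendsto.mono_left ?_ Nat.hyperfilter_le_atTop
    have h1 := (ENNReal.Tendsto.mul_const (b := volume (Ioo (lo b γ) (hi a γ)))
      ENNReal.tendsto_inv_nat_nhds_zero (Or.inr measure_Ioo_lt_top.ne)).comp (tendsto_add_atTop_nat 1)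
    rw [zero_mul] at h1
    refine tendsto_of_tendsto_of_tendsto_of_le_of_le tendsto_const_nhds h1 (fun _ => zero_le)
      fun n => ?_
    simp only [Function.comp_apply]
    gcongr
    exact inter_subset_left
  have h1 := (tendsto_limVal (a := a) (b := b) (γ := γ) (Tinv a b γ ⁻¹' A)).add (hz fun _ => A)
  have h2 := (tendsto_limVal (a := a) (b := b) (γ := γ) A).add
    (hz fun n => (Tinv a b γ)^[n + 1] ⁻¹' A)
  rw [add_zero] at h1 h2
  refine tendsto_nhds_unique h1 (h2.congr fun n => ?_)
  exact (avg_preimage n hA).symm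

lemma limVal_le (h : Par a b γ) {C : ℝ} (hC : ∀ n, F a b γ n (lo b γ) (hi a γ) ≤ C)
    {A : Set ℝ} (hA : MeasurableSet A) :
    limVal a b γ A ≤ ENNReal.ofReal C * volume (A ∩ Icc (lo b γ) (hi a γ)) :=
  le_of_tendsto' (tendsto_limVal A) fun n => avg_le h hC n hA

/-- Countable additivity survives the limit because the averages are dominated by a fixed multiple
of Lebesgue measure on `I`. -/
lemma limVal_iUnion (h : Par a b γ) {f : ℕ → Set ℝ} (hf : ∀ i, MeasurableSet (f i))
    (hd : Pairwise (Function.onFun Disjoint f)) :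
    limVal a b γ (⋃ i, f i) = ∑' i, limVal a b γ (f i) := by
  obtain ⟨C, hC0, hC⟩ := exists_bound h
  set t : ℕ → ℝ≥0∞ := fun N => ∑' i, ENNReal.ofReal C *
    volume (f (i + N) ∩ Icc (lo b γ) (hi a γ)) with ht
  have ht0 : Tendsto t atTop (𝓝 0) := by
    refine ENNReal.tendsto_sum_nat_add
      (fun i => ENNReal.ofReal C * volume (f i ∩ Icc (lo b γ) (hi a γ))) ?_
    rw [ENNReal.tsum_mul_left, ← measure_iUnion
      (fun i j hij => (hd hij).mono inter_subset_left inter_subset_left)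
      (fun i => (hf i).inter measurableSet_Icc), ← iUnion_inter]
    exact ENNReal.mul_ne_top ENNReal.ofReal_ne_top
      ((measure_mono inter_subset_right).trans_lt measure_Icc_lt_top).ne
  have hsplit : ∀ N n, avg a b γ n (⋃ i, f i) =
      ∑ i ∈ Finset.range N, avg a b γ n (f i) + ∑' i, avg a b γ n (f (i + N)) := fun N n => by
    rw [measure_iUnion hd hf, ENNReal.summable.sum_add_tsum_nat_add']
  have hsum : ∀ N, Tendsto (fun n => ∑ i ∈ Finset.range N, avg a b γ n (f i)) (hyperfilter ℕ)
      (𝓝 (∑ i ∈ Finset.range N, limVal a b γ (f i))) := fun N =>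
    tendsto_finsetSum _ fun i _ => tendsto_limVal (f i)
  have hU := tendsto_limVal (a := a) (b := b) (γ := γ) (⋃ i, f i)
  have hlim := ENNReal.tendsto_nat_tsum fun i => limVal a b γ (f i)
  refine le_antisymm ?_ ?_
  · have h2 := hlim.add ht0
    rw [add_zero] at h2
    refine ge_of_tendsto' h2 fun N => ?_
    refine le_of_tendsto_of_tendsto' hU ((hsum N).add tendsto_const_nhds) fun n => ?_
    rw [hsplit N n]
    gcongr
    exact ENNReal.tsum_le_tsum fun i => avg_le h hC n (hf _)
  · refine le_of_tendsto' hlim fun N => ?_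
    refine le_of_tendsto_of_tendsto' (hsum N) hU fun n => ?_
    rw [hsplit N n]
    exact le_self_add

/-- An absolutely continuous `T`-invariant Borel probability measure on `I`. -/
structure Acip (a b γ : ℝ) (μ : Measure ℝ) : Prop where
  prob : IsProbabilityMeasure μ
  compl : μ (Icc (lo b γ) (hi a γ))ᶜ = 0
  inv : MeasurePreserving (Tinv a b γ) μ μ
  ac : μ ≪ volume

lemma exists_acip (h : Par a b γ) : ∃ μ, Acip a b γ μ := by
  obtain ⟨C, hC0, hC⟩ := exists_bound h
  have h0 : limVal a b γ ∅ = 0 :=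
    le_antisymm ((limVal_le h hC MeasurableSet.empty).trans (by simp)) zero_le
  set ν := Measure.ofMeasurable (fun A _ => limVal a b γ A) h0
    (fun f hf hd => limVal_iUnion h hf hd)
  have hν : ∀ A, MeasurableSet A → ν A = limVal a b γ A := fun A hA =>
    Measure.ofMeasurable_apply A hA
  have huniv : ν univ = volume (Ioo (lo b γ) (hi a γ)) := by
    rw [hν _ MeasurableSet.univ]
    refine tendsto_nhds_unique (tendsto_limVal univ) ?_
    simp_rw [avg_univ]
    exact tendsto_const_nhds
  have hne : volume (Ioo (lo b γ) (hi a γ)) ≠ 0 := by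
    have := h.valid.lt
    rw [Real.volume_Ioo]
    simpa using this
  have hfin : volume (Ioo (lo b γ) (hi a γ)) ≠ ∞ := measure_Ioo_lt_top.ne
  have hinv : MeasurePreserving (Tinv a b γ) ν ν := by
    refine ⟨measurable_Tinv, Measure.ext fun A hA => ?_⟩
    rw [Measure.map_apply measurable_Tinv hA, hν _ hA, hν _ (measurable_Tinv hA),
      limVal_preimage hA]
  refine ⟨(volume (Ioo (lo b γ) (hi a γ)))⁻¹ • ν, ⟨⟨?_⟩, ?_, hinv.smul_measure _, ?_⟩⟩
  · rw [Measure.smul_apply, huniv, smul_eq_mul, ENNReal.inv_mul_cancel hne hfin]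
  · have : ν (Icc (lo b γ) (hi a γ))ᶜ = 0 := by
      rw [hν _ measurableSet_Icc.compl]
      refine le_antisymm ((limVal_le h hC measurableSet_Icc.compl).trans ?_) zero_le
      rw [compl_inter_self, measure_empty, mul_zero]
    rw [Measure.smul_apply, this, smul_zero]
  · refine Measure.AbsolutelyContinuous.smul_left
      (Measure.AbsolutelyContinuous.mk fun A hA hA0 => ?_) _
    rw [hν _ hA]
    refine le_antisymm ((limVal_le h hC hA).trans ?_) zero_le
    rw [measure_mono_null inter_subset_left hA0, mul_zero]

/-! ### Ergodicity and uniqueness -/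

lemma Acip.null {μ : Measure ℝ} (hμ : Acip a b γ μ) {A : Set ℝ}
    (hA : volume (A ∩ Ioo (lo b γ) (hi a γ)) = 0) : μ A = 0 := by
  have h1 : volume (A ∩ Icc (lo b γ) (hi a γ)) = 0 := by
    rw [← hA]
    exact measure_congr ((ae_eq_refl A).inter Ioo_ae_eq_Icc.symm)
  refine measure_mono_null ?_ (measure_union_null (hμ.ac h1) hμ.compl)
  intro x hx
  by_cases hxI : x ∈ Icc (lo b γ) (hi a γ)
  · exact Or.inl ⟨hx, hxI⟩
  · exact Or.inr hxI

/-- An invariant set and its complement cannot both have positive measure: both would have full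
Lebesgue measure in a neighbourhood of `γ`. -/
lemma Acip.ergodic (h : Par a b γ) {μ : Measure ℝ} (hμ : Acip a b γ μ) :
    Ergodic (Tinv a b γ) μ := by
  refine ⟨hμ.inv, ⟨fun s hs hinv => eventuallyConst_set'.2 ?_⟩⟩
  by_cases h1 : volume (s ∩ Ioo (lo b γ) (hi a γ)) = 0
  · exact Or.inl (ae_eq_empty.2 (hμ.null h1))
  by_cases h2 : volume (sᶜ ∩ Ioo (lo b γ) (hi a γ)) = 0
  · exact Or.inr (ae_eq_univ.2 (hμ.null h2))
  exfalso
  have hmem : ∀ x, Tinv a b γ x ∈ s ↔ x ∈ s := fun x => by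
    rw [← mem_preimage, hinv]
  obtain ⟨p, q, hp, hq, hpq⟩ := exists_full_nhds h hs h1
    (Eventually.of_forall fun x hx => (hmem x).2 hx)
  obtain ⟨p', q', hp', hq', hpq'⟩ := exists_full_nhds h hs.compl h2
    (Eventually.of_forall fun x hx hx' => hx ((hmem x).1 hx'))
  have h3 : volume (Ioo (max p p') (min q q')) = 0 := by
    refine measure_mono_null ?_ (measure_union_null hpq hpq')
    rintro x ⟨hx1, hx2⟩
    rw [max_lt_iff] at hx1
    rw [lt_min_iff] at hx2
    by_cases hxs : x ∈ s
    · exact Or.inr ⟨⟨hx1.2, hx2.2⟩, fun hc => hc hxs⟩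
    · exact Or.inl ⟨⟨hx1.1, hx2.1⟩, hxs⟩
  rw [Real.volume_Ioo, ENNReal.ofReal_eq_zero] at h3
  have := (max_lt hp hp').trans (lt_min hq hq')
  linarith

/-- Both measures are absolutely continuous with respect to their midpoint, which is ergodic. -/
lemma Acip.unique (h : Par a b γ) {μ μ' : Measure ℝ} (hμ : Acip a b γ μ) (hμ' : Acip a b γ μ') :
    μ' = μ := by
  have hp := hμ.prob
  have hp' := hμ'.prob
  have h2 : (2 : ℝ≥0∞)⁻¹ ≠ 0 := by simp
  have hm : Acip a b γ ((2 : ℝ≥0∞)⁻¹ • (μ + μ')) := by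
    refine ⟨⟨?_⟩, ?_, ?_, ?_⟩
    · rw [Measure.smul_apply, Measure.add_apply, measure_univ, measure_univ, smul_eq_mul,
        one_add_one_eq_two]
      exact ENNReal.inv_mul_cancel (by simp) (by simp)
    · rw [Measure.smul_apply, Measure.add_apply, hμ.compl, hμ'.compl]
      simp
    · exact (hμ.inv.add_measure hμ'.inv).smul_measure _
    · exact Measure.AbsolutelyContinuous.smul_left (hμ.ac.add_left hμ'.ac) _
  have hmp := hm.prob
  have he := hm.ergodic h
  have hac : μ ≪ (2 : ℝ≥0∞)⁻¹ • (μ + μ') :=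
    (Measure.AbsolutelyContinuous.rfl.add_right μ').trans (Measure.absolutelyContinuous_smul h2)
  have hac' : μ' ≪ (2 : ℝ≥0∞)⁻¹ • (μ + μ') := by
    rw [add_comm]
    exact (Measure.AbsolutelyContinuous.rfl.add_right μ).trans
      (Measure.absolutelyContinuous_smul h2)
  rw [he.eq_of_absolutelyContinuous hμ'.inv hac', ← he.eq_of_absolutelyContinuous hμ.inv hac]

/-! ### The support -/

lemma continuousAt_Tinv {x : ℝ} (hx : x ≠ γ) : ContinuousAt (Tinv a b γ) x := by
  rcases hx.lt_or_gt with h1 | h1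
  · have h2 : ContinuousAt (fun x : ℝ => x / a) x := by fun_prop
    refine h2.congr ?_
    filter_upwards [Iio_mem_nhds h1] with y hy
    exact (Tinv_left hy).symm
  · have h2 : ContinuousAt (fun x : ℝ => (x - 1) / b) x := by fun_prop
    refine h2.congr ?_
    filter_upwards [Ioi_mem_nhds h1] with y hy
    exact (Tinv_right (le_of_lt hy)).symm

/-- The support is forward invariant, except possibly at the discontinuity. -/
lemma Acip.Tinv_mem_support {μ : Measure ℝ} (hμ : Acip a b γ μ) {x : ℝ} (hx : x ∈ μ.support)
    (hxγ : x ≠ γ) : Tinv a b γ x ∈ μ.support := by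
  rw [Measure.support_eq_forall_isOpen]
  intro U hxU hU
  rw [← hμ.inv.measure_preimage hU.measurableSet.nullMeasurableSet]
  exact (Measure.mem_support_iff_forall x).1 hx _ (continuousAt_Tinv hxγ (hU.mem_nhds hxU))

/-- The component of `γ` in the support is a non-degenerate interval around `γ`. -/
lemma Acip.exists_component (h : Par a b γ) {μ : Measure ℝ} (hμ : Acip a b γ μ) :
    ∃ p q, p < γ ∧ γ < q ∧ Icc p q ⊆ μ.support ∧
      ∀ u v, u ≤ γ → γ ≤ v → Icc u v ⊆ μ.support → Icc u v ⊆ Icc p q := by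
  have hprob := hμ.prob
  have hclosed : IsClosed μ.support := Measure.isClosed_support
  have hpos : volume (μ.support ∩ Ioo (lo b γ) (hi a γ)) ≠ 0 := by
    intro h0
    have h1 : μ univ ≤ μ μ.support + μ μ.supportᶜ := by
      rw [← union_compl_self μ.support]
      exact measure_union_le _ _
    rw [hμ.null h0, Measure.measure_compl_support, measure_univ] at h1
    simp at h1
  obtain ⟨p, q, hp, hq, hpq⟩ := exists_full_nhds h hclosed.measurableSet hpos (by
    filter_upwards [compl_mem_ae_iff.2 (measure_singleton γ)] with x hxγ hx
    exact hμ.Tinv_mem_support hx hxγ)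
  have hsub : Ioo p q ⊆ μ.support := by
    rw [← sdiff_eq_empty]
    exact ((isOpen_Ioo.sdiff hclosed).measure_eq_zero_iff volume).1 hpq
  have hγS : γ ∈ μ.support := hsub ⟨hp, hq⟩
  set K := connectedComponentIn μ.support γ
  have hKS : K ⊆ μ.support := connectedComponentIn_subset _ _
  have hKconn : IsConnected K := isConnected_connectedComponentIn_iff.2 hγS
  have hKclosed : IsClosed K := by
    refine closure_subset_iff_isClosed.1 ?_
    exact hKconn.closure.isPreconnected.subset_connectedComponentIn
      (subset_closure (mem_connectedComponentIn hγS)) (closure_minimal hKS hclosed)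
  have hSI : μ.support ⊆ Icc (lo b γ) (hi a γ) :=
    Measure.support_subset_of_isClosed isClosed_Icc (mem_ae_iff.2 hμ.compl)
  have hKcomp : IsCompact K := isCompact_Icc.of_isClosed_subset hKclosed (hKS.trans hSI)
  have hKeq := eq_Icc_of_connected_compact hKconn hKcomp
  have hIooK : Ioo p q ⊆ K := isPreconnected_Ioo.subset_connectedComponentIn ⟨hp, hq⟩ hsub
  refine ⟨sInf K, sSup K, ?_, ?_, hKeq ▸ hKS, fun u v hu hv huv => ?_⟩
  · obtain ⟨x, hx1, hx2⟩ := exists_between hp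
    exact (csInf_le hKcomp.bddBelow (hIooK ⟨hx1, hx2.trans hq⟩)).trans_lt hx2
  · obtain ⟨x, hx1, hx2⟩ := exists_between hq
    exact hx1.trans_le (le_csSup hKcomp.bddAbove (hIooK ⟨hp.trans hx1, hx2⟩))
  · rw [← hKeq]
    exact isPreconnected_Icc.subset_connectedComponentIn ⟨hu, hv⟩ huv

lemma orb_step (h : Par a b γ) {u v : ℝ} {i : ℕ}
    (hi : (orb a b γ u v i).2 ≤ γ ∨ γ ≤ (orb a b γ u v i).1) {x : ℝ}
    (hx : x ∈ Icc (orb a b γ u v i).1 (orb a b γ u v i).2) (hxγ : x ≠ γ) :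
    Tinv a b γ x ∈ Icc (orb a b γ u v (i + 1)).1 (orb a b γ u v (i + 1)).2 := by
  have ha := h.ha
  have hb := h.b_pos
  rcases le_or_gt (orb a b γ u v i).2 γ with h1 | h1
  · rw [orb_left h1, Tinv_left (lt_of_le_of_ne (hx.2.trans h1) hxγ)]
    exact ⟨div_le_div_of_nonneg_right hx.1 ha.le, div_le_div_of_nonneg_right hx.2 ha.le⟩
  · rw [orb_right h1, Tinv_right ((hi.resolve_left (not_le.2 h1)).trans hx.1)]
    exact ⟨div_le_div_of_nonneg_right (by linarith [hx.1]) hb.le,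
      div_le_div_of_nonneg_right (by linarith [hx.2]) hb.le⟩

/-- The orbit of a subinterval of a closed set that is forward invariant off `γ` stays in that
set. -/
lemma orb_subset (h : Par a b γ) {S : Set ℝ} (hS : IsClosed S)
    (hinv : ∀ x ∈ S, x ≠ γ → Tinv a b γ x ∈ S) {u v : ℝ} (huv : Icc u v ⊆ S) {n : ℕ}
    (hn : ∀ i < n, (orb a b γ u v i).2 ≤ γ ∨ γ ≤ (orb a b γ u v i).1)
    (hval : ∀ i ≤ n, Valid a b γ (orb a b γ u v i).1 (orb a b γ u v i).2) {i : ℕ} (hi : i ≤ n) :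
    Icc (orb a b γ u v i).1 (orb a b γ u v i).2 ⊆ S := by
  have ha := h.ha
  have hb := h.b_pos
  induction i with
  | zero => exact huv
  | succ i ih =>
    have ih := ih (by omega)
    rw [← closure_Ioo (hval (i + 1) hi).lt.ne]
    refine closure_minimal ?_ hS
    rcases le_or_gt (orb a b γ u v i).2 γ with h1 | h1
    · rw [orb_left h1]
      rintro y ⟨hy1, hy2⟩
      rw [div_lt_iff₀ ha] at hy1
      rw [lt_div_iff₀ ha] at hy2
      have hlt := hy2.trans_le h1
      have := hinv (y * a) (ih ⟨hy1.le, hy2.le⟩) hlt.ne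
      rwa [Tinv_left hlt, mul_div_cancel_right₀ _ ha.ne'] at this
    · rw [orb_right h1]
      rintro y ⟨hy1, hy2⟩
      rw [div_lt_iff₀ hb] at hy1
      rw [lt_div_iff₀ hb] at hy2
      have hgt : γ < y * b + 1 := by linarith [(hn i (by omega)).resolve_left (not_le.2 h1)]
      have := hinv (y * b + 1) (ih ⟨by linarith, by linarith⟩) hgt.ne'
      rwa [Tinv_right hgt.le, add_sub_cancel_right, mul_div_cancel_right₀ _ hb.ne'] at this

/-- If `[p, q]` is the component of `γ` in the support, the orbits of `[p, γ]` and `[γ, q]` stay in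
the support and return to `[p, q]`. The intervals met before the return, together with `[p, q]`,
form an invariant set of positive measure, which has full measure by ergodicity. -/
lemma Acip.support_eq (h : Par a b γ) {μ : Measure ℝ} (hμ : Acip a b γ μ) :
    ∃ (k : ℕ) (e f : Fin k → ℝ), (∀ i, e i ≤ f i) ∧
      μ.support = (⋃ i, Icc (e i) (f i)) ∧ ∃ i, γ ∈ Ioo (e i) (f i) := by
  have hprob := hμ.prob
  have hclosed : IsClosed μ.support := Measure.isClosed_support
  have hSI : μ.support ⊆ Icc (lo b γ) (hi a γ) :=
    Measure.support_subset_of_isClosed isClosed_Icc (mem_ae_iff.2 hμ.compl)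
  obtain ⟨p, q, hp, hq, hK, hmax⟩ := hμ.exists_component h
  have hplo : lo b γ ≤ p := (hSI (hK ⟨le_rfl, (hp.trans hq).le⟩)).1
  have hqhi : q ≤ hi a γ := (hSI (hK ⟨(hp.trans hq).le, le_rfl⟩)).2
  obtain ⟨n, hn, hnv, hn1, hn2⟩ := exists_hit h (⟨hplo, hp, h.lt_hi.le⟩ : Valid a b γ p γ)
  obtain ⟨m, hm, hmv, hm1, hm2⟩ := exists_hit h (⟨h.lo_lt.le, hq, hqhi⟩ : Valid a b γ γ q)
  have hn0 : 0 < n := by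
    rcases n.eq_zero_or_pos with h0 | h0
    · subst h0
      exact absurd hn2 (lt_irrefl γ)
    · exact h0
  have hm0 : 0 < m := by
    rcases m.eq_zero_or_pos with h0 | h0
    · subst h0
      exact absurd hm1 (lt_irrefl γ)
    · exact h0
  have hinv : ∀ x ∈ μ.support, x ≠ γ → Tinv a b γ x ∈ μ.support :=
    fun x hx hxγ => hμ.Tinv_mem_support hx hxγ
  have hnS : ∀ i ≤ n, Icc (orb a b γ p γ i).1 (orb a b γ p γ i).2 ⊆ μ.support := fun i hi =>
    orb_subset h hclosed hinv ((Icc_subset_Icc_right hq.le).trans hK) hn hnv hi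
  have hmS : ∀ i ≤ m, Icc (orb a b γ γ q i).1 (orb a b γ γ q i).2 ⊆ μ.support := fun i hi =>
    orb_subset h hclosed hinv ((Icc_subset_Icc_left hp.le).trans hK) hm hmv hi
  let g : Option (Fin (n + 1) ⊕ Fin (m + 1)) → ℝ × ℝ
    | none => (p, q)
    | some (Sum.inl i) => orb a b γ p γ i
    | some (Sum.inr i) => orb a b γ γ q i
  set W := ⋃ j, Icc (g j).1 (g j).2 with hW
  have hWK : Icc p q ⊆ W := subset_iUnion (fun j => Icc (g j).1 (g j).2) none
  have hWn : ∀ i ≤ n, Icc (orb a b γ p γ i).1 (orb a b γ p γ i).2 ⊆ W := fun i hi =>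
    subset_iUnion (fun j => Icc (g j).1 (g j).2) (some (Sum.inl ⟨i, by omega⟩))
  have hWm : ∀ i ≤ m, Icc (orb a b γ γ q i).1 (orb a b γ γ q i).2 ⊆ W := fun i hi =>
    subset_iUnion (fun j => Icc (g j).1 (g j).2) (some (Sum.inr ⟨i, by omega⟩))
  have hWclosed : IsClosed W := isClosed_iUnion_of_finite fun j => isClosed_Icc
  have hWS : W ⊆ μ.support := by
    refine iUnion_subset fun j => ?_
    match j with
    | none => exact hK
    | some (Sum.inl i) => exact hnS i (by omega)
    | some (Sum.inr i) => exact hmS i (by omega)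
  have hKinv : ∀ x ∈ Icc p q, x ≠ γ → Tinv a b γ x ∈ W := by
    intro x hx hxγ
    rcases hxγ.lt_or_gt with h1 | h1
    · exact hWn 1 hn0 (orb_step h (i := 0) (hn 0 hn0) ⟨hx.1, h1.le⟩ hxγ)
    · exact hWm 1 hm0 (orb_step h (i := 0) (hm 0 hm0) ⟨h1.le, hx.2⟩ hxγ)
  have hWinv : ∀ x ∈ W, x ≠ γ → Tinv a b γ x ∈ W := by
    intro x hx hxγ
    obtain ⟨j, hj⟩ := mem_iUnion.1 hx
    match j with
    | none => exact hKinv x hj hxγ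
    | some (Sum.inl ⟨i, hi⟩) =>
      rcases (Nat.lt_succ_iff.1 hi).lt_or_eq with h1 | h1
      · exact hWn (i + 1) h1 (orb_step h (hn i h1) hj hxγ)
      · subst h1
        exact hKinv x (hmax _ _ hn1.le hn2.le (hnS i le_rfl) hj) hxγ
    | some (Sum.inr ⟨i, hi⟩) =>
      rcases (Nat.lt_succ_iff.1 hi).lt_or_eq with h1 | h1
      · exact hWm (i + 1) h1 (orb_step h (hm i h1) hj hxγ)
      · subst h1
        exact hKinv x (hmax _ _ hm1.le hm2.le (hmS i le_rfl) hj) hxγ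
  have hae : W ≤ᵐ[μ] Tinv a b γ ⁻¹' W := by
    filter_upwards [compl_mem_ae_iff.2 (hμ.ac (measure_singleton γ))] with x hxγ hx
    exact hWinv x hx hxγ
  have hSW : μ.support ⊆ W := by
    rcases (hμ.ergodic h).ae_empty_or_univ_of_ae_le_preimage hWclosed.measurableSet.nullMeasurableSet
      hae with h0 | h1
    · have hpos := (Measure.mem_support_iff_forall γ).1 (hK ⟨hp.le, hq.le⟩) _ (Icc_mem_nhds hp hq)
      exact absurd (measure_mono_null hWK (ae_eq_empty.1 h0)) hpos.ne'
    · exact Measure.support_subset_of_isClosed hWclosed (mem_ae_iff.2 (ae_eq_univ.1 h1))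
  have hle : ∀ j, (g j).1 ≤ (g j).2 := by
    intro j
    match j with
    | none => exact (hp.trans hq).le
    | some (Sum.inl i) => exact (hnv i (by omega)).lt.le
    | some (Sum.inr i) => exact (hmv i (by omega)).lt.le
  let σ := Fintype.equivFin (Option (Fin (n + 1) ⊕ Fin (m + 1)))
  refine ⟨_, fun i => (g (σ.symm i)).1, fun i => (g (σ.symm i)).2, fun i => hle _, ?_, σ none, ?_⟩
  · rw [σ.symm.surjective.iUnion_comp fun j => Icc (g j).1 (g j).2]
    exact hSW.antisymm hWS
  · simp only [Equiv.symm_apply_apply]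
    exact ⟨hp, hq⟩

end LorenzMap

/-- **Theorem 5.1 / Corollary 5.2.** Fix `0 < a < 1 < b` and `γ > 1`, and let
`I = [(γ−1)/b, γ/a]`. Then there is a `T`-invariant Borel probability measure `μ` on `I`
which is absolutely continuous with respect to Lebesgue measure; it is ergodic, it is the
unique absolutely continuous `T`-invariant probability measure, and its support is a
union of finitely many intervals, one of which contains `γ` in its interior. -/
theorem acip_for_T (a b γ : ℝ) (ha : 0 < a) (ha1 : a < 1) (hb : 1 < b) (hγ : 1 < γ) :
    ∃ μ : Measure ℝ, IsProbabilityMeasure μ ∧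
      μ ((Set.Icc ((γ - 1) / b) (γ / a))ᶜ) = 0 ∧
      MeasurePreserving (Tinv a b γ) μ μ ∧
      μ ≪ volume ∧
      Ergodic (Tinv a b γ) μ ∧
      (∀ μ' : Measure ℝ, IsProbabilityMeasure μ' →
        μ' ((Set.Icc ((γ - 1) / b) (γ / a))ᶜ) = 0 →
        MeasurePreserving (Tinv a b γ) μ' μ' → μ' ≪ volume → μ' = μ) ∧
      ∃ (k : ℕ) (e f : Fin k → ℝ), (∀ i, e i ≤ f i) ∧
        {x : ℝ | ∀ U : Set ℝ, IsOpen U → x ∈ U → 0 < μ U} = ⋃ i, Set.Icc (e i) (f i) ∧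
        ∃ i, γ ∈ Set.Ioo (e i) (f i) := by
  have h : LorenzMap.Par a b γ := ⟨ha, ha1, hb, hγ⟩
  obtain ⟨μ, hμ⟩ := LorenzMap.exists_acip h
  obtain ⟨k, e, f, hef, hsupp, hγi⟩ := hμ.support_eq h
  refine ⟨μ, hμ.prob, hμ.compl, hμ.inv, hμ.ac, hμ.ergodic h,
    fun μ' h1 h2 h3 h4 => hμ.unique h ⟨h1, h2, h3, h4⟩, k, e, f, hef, ?_, hγi⟩
  rw [← hsupp, Measure.support_eq_forall_isOpen]
  ext x
  exact forall_congr' fun U => forall_comm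
end
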